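/- arXiv:2508.09794 — 4 statements merged into one kernel-verified Lean document; each statement's English description precedes it below -/
import Mathlib

section
/- Let (R, ν_R) and (Q, ν_Q) be normalized BV₀ pairs on (−1,1). Then for every continuously differentiable function φ : ℝ → ℝ whose support is a compact subset of (−1,1), one has ∫_{(−1,1)} φ′(t)·R(t)·Q(t) dt = ∫_{(−1,1)} φ(t)·t·Q(t⁻) dν_R(t) + ∫_{(−1,1)} φ(t)·t·R(t⁺) dν_Q(t), and the same identity holds with Q(t⁻) and R(t⁺) replaced by Q(t⁺) and R(t⁻), respectively. -/
open MeasureTheory Set Filter Function Topology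

/-- A normalized BV₀ pair on `(-1,1)`: a signed Borel measure, represented by its
mutually singular positive part `νp` and negative part `νm`, that is finite on compact
subsets of `(-1,1)`, gives no mass to `{0}` and lives on `(-1,1)`, together with a
function `R` satisfying the fundamental-theorem-of-calculus relations. -/
structure NormBV0 where
  R : ℝ → ℝ
  νp : Measure ℝ
  νm : Measure ℝ
  sing : νp.MutuallySingular νm
  supp_p : νp (Set.Ioo (-1 : ℝ) 1)ᶜ = 0
  supp_m : νm (Set.Ioo (-1 : ℝ) 1)ᶜ = 0
  locfin_p : ∀ K : Set ℝ, IsCompact K → K ⊆ Set.Ioo (-1 : ℝ) 1 → νp K ≠ ⊤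
  locfin_m : ∀ K : Set ℝ, IsCompact K → K ⊆ Set.Ioo (-1 : ℝ) 1 → νm K ≠ ⊤
  zero_p : νp {0} = 0
  zero_m : νm {0} = 0
  fund_pos : ∀ t ∈ Set.Ico (0 : ℝ) 1,
    R t = R 0 - ((∫ s in Set.Ioc (0 : ℝ) t, s ∂νp) - (∫ s in Set.Ioc (0 : ℝ) t, s ∂νm))
  fund_neg : ∀ t ∈ Set.Ioc (-1 : ℝ) 0,
    R t = R 0 + ((∫ s in Set.Ico t (0 : ℝ), s ∂νp) - (∫ s in Set.Ico t (0 : ℝ), s ∂νm))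

/-- The integral of `f` over `S` with respect to the signed measure `νp - νm`. -/
noncomputable def NormBV0.integ (P : NormBV0) (S : Set ℝ) (f : ℝ → ℝ) : ℝ :=
  (∫ s in S, f s ∂P.νp) - (∫ s in S, f s ∂P.νm)

/-- The transform `T_{R,ν} f`. -/
noncomputable def NormBV0.T (P : NormBV0) (f : ℝ → ℝ) (t : ℝ) : ℝ :=
  if 0 < t then P.R t * f t + t * P.integ (Set.Ioc 0 t) f
  else P.R t * f t - t * P.integ (Set.Ico t 0) f


section CumulativeIntegral

variable {μ ν : Measure ℝ} {f g φ : ℝ → ℝ}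

/-- Fubini for `φ'` against the cumulative distribution of a real function `m`. -/
lemma integral_deriv_mul_setIntegral_le {Z : Type*} [MeasurableSpace Z] {π : Measure Z}
    [SFinite π] {m h : Z → ℝ} (hm : Measurable m) (hh : Integrable h π)
    (hφ : ContDiff ℝ 1 φ) (hφc : HasCompactSupport φ) :
    ∫ t, deriv φ t * ∫ z in {z | m z ≤ t}, h z ∂π = -∫ z, φ (m z) * h z ∂π := by
  have hφ' : Integrable (deriv φ) :=
    (hφ.continuous_deriv le_rfl).integrable_of_hasCompactSupport hφc.deriv
  have hS : MeasurableSet {p : ℝ × Z | m p.2 ≤ p.1} :=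
    measurableSet_le (hm.comp measurable_snd) measurable_fst
  have hint : Integrable (uncurry fun (t : ℝ) (z : Z) =>
      {p : ℝ × Z | m p.2 ≤ p.1}.indicator (fun p => deriv φ p.1 * h p.2) (t, z))
      (volume.prod π) :=
    (hφ'.mul_prod hh).indicator hS
  calc ∫ t, deriv φ t * ∫ z in {z | m z ≤ t}, h z ∂π
      = ∫ t, ∫ z, {p : ℝ × Z | m p.2 ≤ p.1}.indicator
          (fun p => deriv φ p.1 * h p.2) (t, z) ∂π := by
        refine integral_congr_ae (ae_of_all _ fun t => ?_)
        have : MeasurableSet {z | m z ≤ t} := measurableSet_le hm measurable_const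
        simp only
        rw [← integral_indicator this, ← integral_const_mul]
        refine integral_congr_ae (ae_of_all _ fun z => ?_)
        simp [indicator_apply]
    _ = ∫ z, (∫ t, {p : ℝ × Z | m p.2 ≤ p.1}.indicator
          (fun p => deriv φ p.1 * h p.2) (t, z)) ∂π := integral_integral_swap hint
    _ = ∫ z, -(φ (m z) * h z) ∂π := by
        refine integral_congr_ae (ae_of_all _ fun z => ?_)
        simp only
        rw [← neg_mul, ← hφc.integral_Ioi_deriv_eq hφ, ← integral_Ici_eq_integral_Ioi,
          ← integral_indicator measurableSet_Ici, ← integral_mul_const]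
        refine integral_congr_ae (ae_of_all _ fun t => ?_)
        simp [indicator_apply]
    _ = _ := integral_neg _

lemma norm_setIntegral_le_integral_norm (hf : Integrable f μ) (s : Set ℝ) :
    ‖∫ x in s, f x ∂μ‖ ≤ ∫ x, ‖f x‖ ∂μ :=
  (norm_integral_le_integral_norm _).trans
    (setIntegral_le_integral hf.norm (ae_of_all _ fun _ => norm_nonneg _))

lemma measurable_setIntegral_Iio [SFinite μ] (hf : Measurable f) :
    Measurable fun t => ∫ x in Iio t, f x ∂μ := by
  have hS : MeasurableSet {p : ℝ × ℝ | p.2 < p.1} :=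
    measurableSet_lt measurable_snd measurable_fst
  have : StronglyMeasurable (uncurry fun t x : ℝ =>
      {p : ℝ × ℝ | p.2 < p.1}.indicator (fun p => f p.2) (t, x)) :=
    ((hf.comp measurable_snd).indicator hS).stronglyMeasurable
  convert this.integral_prod_right (ν := μ) |>.measurable using 2 with t
  rw [← integral_indicator measurableSet_Iio]
  refine integral_congr_ae (ae_of_all _ fun x => ?_)
  simp [indicator_apply]

lemma measurable_setIntegral_Iic [SFinite μ] (hf : Measurable f) :
    Measurable fun t => ∫ x in Iic t, f x ∂μ := by
  have hS : MeasurableSet {p : ℝ × ℝ | p.2 ≤ p.1} :=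
    measurableSet_le measurable_snd measurable_fst
  have : StronglyMeasurable (uncurry fun t x : ℝ =>
      {p : ℝ × ℝ | p.2 ≤ p.1}.indicator (fun p => f p.2) (t, x)) :=
    ((hf.comp measurable_snd).indicator hS).stronglyMeasurable
  convert this.integral_prod_right (ν := μ) |>.measurable using 2 with t
  rw [← integral_indicator measurableSet_Iic]
  refine integral_congr_ae (ae_of_all _ fun x => ?_)
  simp [indicator_apply]

lemma integral_deriv_mul_setIntegral_Iic [SFinite μ] (hf : Integrable f μ)
    (hφ : ContDiff ℝ 1 φ) (hφc : HasCompactSupport φ) :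
    ∫ t, deriv φ t * ∫ x in Iic t, f x ∂μ = -∫ x, φ x * f x ∂μ :=
  integral_deriv_mul_setIntegral_le measurable_id hf hφ hφc

lemma integral_deriv_mul_setIntegral_Iic_mul [SFinite μ] [SFinite ν]
    (hf : Integrable f μ) (hg : Integrable g ν)
    (hφ : ContDiff ℝ 1 φ) (hφc : HasCompactSupport φ) :
    ∫ t, deriv φ t * ((∫ x in Iic t, f x ∂μ) * ∫ y in Iic t, g y ∂ν) =
      -(∫ x, φ x * f x * ∫ y in Iio x, g y ∂ν ∂μ) -
        ∫ y, φ y * g y * ∫ x in Iic y, f x ∂μ ∂ν := by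
  obtain ⟨C, hC⟩ := hφc.exists_bound_of_continuous hφ.continuous
  have hlt : MeasurableSet {p : ℝ × ℝ | p.2 < p.1} :=
    measurableSet_lt measurable_snd measurable_fst
  have hle : MeasurableSet {p : ℝ × ℝ | p.1 ≤ p.2} :=
    measurableSet_le measurable_fst measurable_snd
  have hφf : Integrable (fun x => φ x * f x) μ :=
    hf.bdd_mul hφ.continuous.aestronglyMeasurable (ae_of_all _ hC)
  have hφg : Integrable (fun x => φ x * g x) ν :=
    hg.bdd_mul hφ.continuous.aestronglyMeasurable (ae_of_all _ hC)
  have hi₁ : Integrable ({p : ℝ × ℝ | p.2 < p.1}.indicator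
      fun p => (φ p.1 * f p.1) * g p.2) (μ.prod ν) := (hφf.mul_prod hg).indicator hlt
  have hi₂ : Integrable ({p : ℝ × ℝ | p.1 ≤ p.2}.indicator
      fun p => f p.1 * (φ p.2 * g p.2)) (μ.prod ν) := (hf.mul_prod hφg).indicator hle
  calc ∫ t, deriv φ t * ((∫ x in Iic t, f x ∂μ) * ∫ y in Iic t, g y ∂ν)
      = ∫ t, deriv φ t * ∫ z in {z : ℝ × ℝ | max z.1 z.2 ≤ t}, f z.1 * g z.2 ∂(μ.prod ν) := by
        refine integral_congr_ae (ae_of_all _ fun t => ?_)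
        have : {z : ℝ × ℝ | max z.1 z.2 ≤ t} = Iic t ×ˢ Iic t := by
          ext; simp [Prod.le_def]
        simp only [this, ← setIntegral_prod_mul]
    _ = -∫ z, φ (max z.1 z.2) * (f z.1 * g z.2) ∂(μ.prod ν) :=
        integral_deriv_mul_setIntegral_le (measurable_fst.max measurable_snd)
          (hf.mul_prod hg) hφ hφc
    _ = -((∫ p, {p : ℝ × ℝ | p.2 < p.1}.indicator
            (fun p => (φ p.1 * f p.1) * g p.2) p ∂(μ.prod ν)) +
          ∫ p, {p : ℝ × ℝ | p.1 ≤ p.2}.indicator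
            (fun p => f p.1 * (φ p.2 * g p.2)) p ∂(μ.prod ν)) := by
        rw [← integral_add hi₁ hi₂]
        congr 1
        refine integral_congr_ae (ae_of_all _ fun p => ?_)
        rcases lt_or_ge p.2 p.1 with h | h
        · simp [h, h.le, mul_assoc]
        · simp [h, mul_left_comm]
    _ = _ := by
        rw [integral_prod _ hi₁, integral_prod_symm _ hi₂, neg_add, sub_eq_add_neg]
        congr 3 <;> ext x
        · rw [← integral_indicator measurableSet_Iio, ← integral_const_mul]
          refine integral_congr_ae (ae_of_all _ fun y => ?_)
          simp [indicator_apply]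
        · rw [← integral_indicator measurableSet_Iic, ← integral_const_mul]
          refine integral_congr_ae (ae_of_all _ fun y => ?_)
          simp [indicator_apply, mul_comm]

lemma integral_deriv_mul_add_setIntegral_Iic_mul [SFinite μ] [SFinite ν]
    (hf : Integrable f μ) (hg : Integrable g ν) (hfm : Measurable f) (hgm : Measurable g)
    (hφ : ContDiff ℝ 1 φ) (hφc : HasCompactSupport φ) (c d : ℝ) :
    ∫ t, deriv φ t * ((c + ∫ x in Iic t, f x ∂μ) * (d + ∫ y in Iic t, g y ∂ν)) =
      -(∫ x, φ x * f x * (d + ∫ y in Iio x, g y ∂ν) ∂μ) -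
        ∫ y, φ y * g y * (c + ∫ x in Iic y, f x ∂μ) ∂ν := by
  obtain ⟨C, hC⟩ := hφc.exists_bound_of_continuous hφ.continuous
  have hφ' : Integrable (deriv φ) :=
    (hφ.continuous_deriv le_rfl).integrable_of_hasCompactSupport hφc.deriv
  have hφf : Integrable (fun x => φ x * f x) μ :=
    hf.bdd_mul hφ.continuous.aestronglyMeasurable (ae_of_all _ hC)
  have hφg : Integrable (fun x => φ x * g x) ν :=
    hg.bdd_mul hφ.continuous.aestronglyMeasurable (ae_of_all _ hC)
  have hF {κ : Measure ℝ} {h : ℝ → ℝ} (hh : Integrable h κ) :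
      Integrable (fun t => h t * ∫ x in Iic t, f x ∂μ) κ :=
    hh.mul_bdd (measurable_setIntegral_Iic hfm).aestronglyMeasurable
      (ae_of_all _ fun t => norm_setIntegral_le_integral_norm hf (Iic t))
  have hG {h : ℝ → ℝ} (hh : Integrable h) :
      Integrable (fun t => h t * ∫ x in Iic t, g x ∂ν) :=
    hh.mul_bdd (measurable_setIntegral_Iic hgm).aestronglyMeasurable
      (ae_of_all _ fun t => norm_setIntegral_le_integral_norm hg (Iic t))
  have hG' : Integrable (fun t => φ t * f t * ∫ x in Iio t, g x ∂ν) μ :=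
    hφf.mul_bdd (measurable_setIntegral_Iio hgm).aestronglyMeasurable
      (ae_of_all _ fun t => norm_setIntegral_le_integral_norm hg (Iio t))
  have hFG : Integrable (fun t => deriv φ t *
      ((∫ x in Iic t, f x ∂μ) * ∫ y in Iic t, g y ∂ν)) := by
    simpa only [mul_assoc] using hG (hF hφ')
  have hzero : ∫ t, deriv φ t = 0 := integral_eq_zero_of_hasDerivAt_of_integrable
      (fun t => (hφ.differentiable one_ne_zero t).hasDerivAt) hφ'
      (hφ.continuous.integrable_of_hasCompactSupport hφc)
  have expand : ∀ t, deriv φ t *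
      ((c + ∫ x in Iic t, f x ∂μ) * (d + ∫ y in Iic t, g y ∂ν)) =
      c * d * deriv φ t + c * (deriv φ t * ∫ y in Iic t, g y ∂ν) +
        d * (deriv φ t * ∫ x in Iic t, f x ∂μ) +
        deriv φ t * ((∫ x in Iic t, f x ∂μ) * ∫ y in Iic t, g y ∂ν) := fun t => by ring
  simp_rw [expand]
  rw [integral_add (by fun_prop) hFG, integral_add, integral_add, integral_const_mul,
    integral_const_mul, integral_const_mul, hzero,
    integral_deriv_mul_setIntegral_Iic hf hφ hφc, integral_deriv_mul_setIntegral_Iic hg hφ hφc,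
    integral_deriv_mul_setIntegral_Iic_mul hf hg hφ hφc]
  · simp_rw [mul_add]
    rw [integral_add (hφf.mul_const d) hG', integral_add (hφg.mul_const c) (hF hφg),
      integral_mul_const, integral_mul_const]
    ring
  · exact hφ'.const_mul _
  · exact (hG hφ').const_mul _
  · exact (hφ'.const_mul _).add ((hG hφ').const_mul _)
  · exact (hF hφ').const_mul _

/-- Integrals over half-lines, each open or closed, tend from the right to the integral over the
closed half-line. -/
lemma tendsto_setIntegral_nhdsGT (hf : Integrable f μ) {S : ℝ → Set ℝ}
    (hS : ∀ u, MeasurableSet (S u)) (hlo : ∀ u, Iio u ⊆ S u) (hhi : ∀ u, S u ⊆ Iic u) (t : ℝ) :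
    Tendsto (fun u => ∫ x in S u, f x ∂μ) (𝓝[>] t) (𝓝 (∫ x in Iic t, f x ∂μ)) := by
  simp_rw [← integral_indicator (hS _), ← integral_indicator measurableSet_Iic]
  refine tendsto_integral_filter_of_dominated_convergence (fun x => ‖f x‖)
    (Eventually.of_forall fun u => hf.aestronglyMeasurable.indicator (hS u))
    (Eventually.of_forall fun u => ae_of_all _ fun x => norm_indicator_le_norm_self _ _)
    hf.norm (ae_of_all _ fun x => tendsto_const_nhds.congr' ?_)
  rcases le_or_gt x t with h | h
  · filter_upwards [self_mem_nhdsWithin] with u hu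
    rw [indicator_of_mem (mem_Iic.2 h), indicator_of_mem (hlo u (h.trans_lt hu))]
  · filter_upwards [nhdsWithin_le_nhds (Iio_mem_nhds h)] with u hu
    rw [indicator_of_notMem (by simpa using h),
      indicator_of_notMem fun hx => not_lt.2 (hhi u hx) (mem_Iio.1 hu)]

lemma tendsto_setIntegral_nhdsLT (hf : Integrable f μ) {S : ℝ → Set ℝ}
    (hS : ∀ u, MeasurableSet (S u)) (hlo : ∀ u, Iio u ⊆ S u) (hhi : ∀ u, S u ⊆ Iic u) (t : ℝ) :
    Tendsto (fun u => ∫ x in S u, f x ∂μ) (𝓝[<] t) (𝓝 (∫ x in Iio t, f x ∂μ)) := by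
  simp_rw [← integral_indicator (hS _), ← integral_indicator measurableSet_Iio]
  refine tendsto_integral_filter_of_dominated_convergence (fun x => ‖f x‖)
    (Eventually.of_forall fun u => hf.aestronglyMeasurable.indicator (hS u))
    (Eventually.of_forall fun u => ae_of_all _ fun x => norm_indicator_le_norm_self _ _)
    hf.norm (ae_of_all _ fun x => tendsto_const_nhds.congr' ?_)
  rcases lt_or_ge x t with h | h
  · filter_upwards [nhdsWithin_le_nhds (Ioi_mem_nhds h)] with u hu
    rw [indicator_of_mem (mem_Iio.2 h), indicator_of_mem (hlo u hu)]
  · filter_upwards [self_mem_nhdsWithin] with u hu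
    rw [indicator_of_notMem (by simpa using h),
      indicator_of_notMem fun hx => not_lt.2 (hhi u hx) (lt_of_lt_of_le hu h)]

lemma ae_setIntegral_eq_setIntegral_Iic [SFinite μ] {S : ℝ → Set ℝ}
    (hlo : ∀ u, Iio u ⊆ S u) (hhi : ∀ u, S u ⊆ Iic u) :
    ∀ᵐ t : ℝ, ∫ x in S t, f x ∂μ = ∫ x in Iic t, f x ∂μ := by
  have hc : {t : ℝ | 0 < μ {t}}.Countable :=
    Measure.countable_meas_pos_of_disjoint_iUnion (fun t => measurableSet_singleton t)
      fun a b h => by simpa [onFun] using h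
  filter_upwards [hc.ae_notMem volume] with t ht
  have ht0 : μ {t} = 0 := by simpa using ht
  refine setIntegral_congr_set (ae_eq_set.2 ⟨?_, ?_⟩)
  · rw [sdiff_eq_empty.2 (hhi t), measure_empty]
  · refine measure_mono_null (fun x hx => ?_) ht0
    exact le_antisymm hx.1 (not_lt.1 fun h => hx.2 (hlo t h))

end CumulativeIntegral

/-- The closed half-line `(-∞, t]` for `t ≥ 0` and the open one `(-∞, t)` for `t < 0`: the
convention of a normalized pair for charging an atom at `t`. -/
def normHalfLine (t : ℝ) : Set ℝ := {x | x < t ∨ x = t ∧ 0 ≤ t}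

lemma normHalfLine_of_nonneg {t : ℝ} (ht : 0 ≤ t) : normHalfLine t = Iic t := by
  ext x; simp [normHalfLine, ht, le_iff_lt_or_eq]

lemma normHalfLine_of_neg {t : ℝ} (ht : t < 0) : normHalfLine t = Iio t := by
  ext x; simp [normHalfLine, ht]

lemma measurableSet_normHalfLine (t : ℝ) : MeasurableSet (normHalfLine t) := by
  rcases le_or_gt 0 t with ht | ht
  · rw [normHalfLine_of_nonneg ht]; exact measurableSet_Iic
  · rw [normHalfLine_of_neg ht]; exact measurableSet_Iio

lemma Iio_subset_normHalfLine (t : ℝ) : Iio t ⊆ normHalfLine t := fun _ => Or.inl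

lemma normHalfLine_subset_Iic (t : ℝ) : normHalfLine t ⊆ Iic t := fun _ hx =>
  hx.elim le_of_lt fun h => h.1.le

namespace NormBV0

lemma exists_sign (P : NormBV0) : ∃ σ : ℝ → ℝ, Measurable σ ∧ (∀ x, ‖σ x‖ ≤ 1) ∧
    (∀ᵐ x ∂P.νp, σ x = 1) ∧ ∀ᵐ x ∂P.νm, σ x = -1 := by
  classical
  have hA := P.sing.measurableSet_nullSet
  refine ⟨fun x => if x ∈ P.sing.nullSet then -1 else 1,
    Measurable.ite hA measurable_const measurable_const, fun x => ?_, ?_, ?_⟩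
  · dsimp only; split_ifs <;> simp
  · filter_upwards [measure_eq_zero_iff_ae_notMem.1 P.sing.measure_nullSet] with x hx
    simp [hx]
  · filter_upwards [measure_eq_zero_iff_ae_notMem.1 P.sing.measure_compl_nullSet] with x hx
    simp [not_not.1 hx]

/-- On `[-r, r]` a normalized pair is represented by a density against a finite measure. -/
lemma exists_density (P : NormBV0) {r : ℝ} (hr : r < 1) :
    ∃ (μ : Measure ℝ) (w : ℝ → ℝ) (c : ℝ), IsFiniteMeasure μ ∧ Measurable w ∧
      Integrable w μ ∧
      (∀ (h : ℝ → ℝ) (C : ℝ), Measurable h → (∀ x, ‖h x‖ ≤ C) → (∀ x ∉ Icc (-r) r, h x = 0) →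
        P.integ (Ioo (-1) 1) (fun t => h t * t) = -∫ t, h t * w t ∂μ) ∧
      ∀ t ∈ Ioo (-r) r, P.R t = c + ∫ x in normHalfLine t, w x ∂μ := by
  obtain ⟨σ, hσm, hσb, hσp, hσn⟩ := P.exists_sign
  have hK : Icc (-r) r ⊆ Ioo (-1 : ℝ) 1 := Icc_subset_Ioo (by linarith) hr
  have hp := P.locfin_p _ isCompact_Icc hK
  have hn := P.locfin_m _ isCompact_Icc hK
  set μ : Measure ℝ := (P.νp + P.νm).restrict (Icc (-r) r) with hμ
  have hfin : IsFiniteMeasure μ := ⟨by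
    rw [hμ, Measure.restrict_apply_univ, Measure.add_apply]
    exact ENNReal.add_lt_top.2 ⟨hp.lt_top, hn.lt_top⟩⟩
  have key (S : Set ℝ) (hS : MeasurableSet S) (hSK : S ⊆ Icc (-r) r) (h : ℝ → ℝ) (C : ℝ)
      (hh : Measurable h) (hC : ∀ x ∈ S, ‖h x‖ ≤ C) :
      P.integ S h = ∫ x in S, σ x * h x ∂μ := by
    have hσh (ρ : Measure ℝ) (hρ : ρ (Icc (-r) r) ≠ ⊤) :
        IntegrableOn (fun x => σ x * h x) S ρ := by
      refine Measure.integrableOn_of_bounded (M := C) (measure_ne_top_of_subset hSK hρ)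
        (hσm.mul hh).aestronglyMeasurable ?_
      filter_upwards [ae_restrict_mem hS] with x hx
      rw [norm_mul]
      exact (mul_le_of_le_one_left (norm_nonneg _) (hσb x)).trans (hC x hx)
    rw [hμ, Measure.restrict_restrict_of_subset hSK, Measure.restrict_add,
      integral_add_measure (hσh _ hp) (hσh _ hn), NormBV0.integ, sub_eq_add_neg,
      ← integral_neg]
    congr 1
    · refine integral_congr_ae ?_
      filter_upwards [ae_restrict_of_ae hσp] with x hx
      rw [hx, one_mul]
    · refine integral_congr_ae ?_
      filter_upwards [ae_restrict_of_ae hσn] with x hx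
      rw [hx, neg_one_mul]
  have hwm : Measurable fun x => -(σ x * x) := (hσm.mul measurable_id).neg
  have hw : Integrable (fun x => -(σ x * x)) μ := by
    refine Integrable.of_bound hwm.aestronglyMeasurable r ?_
    filter_upwards [ae_restrict_mem measurableSet_Icc] with x hx
    rw [norm_neg, norm_mul]
    exact (mul_le_of_le_one_left (norm_nonneg _) (hσb x)).trans (abs_le.2 hx)
  have hμ0 : μ {0} = 0 := by
    refine le_antisymm ((Measure.restrict_apply_le _ _).trans ?_) zero_le
    simp [P.zero_p, P.zero_m]
  refine ⟨μ, fun x => -(σ x * x), P.R 0 - ∫ x in Iic 0, -(σ x * x) ∂μ, hfin, hwm, hw, ?_, ?_⟩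
  · intro h C hh hC h0
    have hsub (ρ : Measure ℝ) :
        ∫ t in Ioo (-1) 1, h t * t ∂ρ = ∫ t in Icc (-r) r, h t * t ∂ρ :=
      setIntegral_eq_of_subset_of_forall_sdiff_eq_zero measurableSet_Ioo hK
        fun x hx => by rw [h0 x hx.2, zero_mul]
    have := key _ measurableSet_Icc subset_rfl (fun t => h t * t) (C * r)
      (hh.mul measurable_id) fun x hx => by
        rw [norm_mul]
        exact mul_le_mul (hC x) (abs_le.2 hx) (norm_nonneg _) ((norm_nonneg _).trans (hC x))
    rw [NormBV0.integ] at this ⊢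
    rw [hsub, hsub, this, hμ, Measure.restrict_restrict_of_subset subset_rfl, ← integral_neg]
    congr 1 with t
    ring
  · intro t ht
    rcases le_or_gt 0 t with h0 | h0
    · have := key (Ioc 0 t) measurableSet_Ioc
        (fun x hx => ⟨by linarith [hx.1, ht.2], hx.2.trans ht.2.le⟩) (fun x => x) r measurable_id
        fun x hx => abs_le.2 ⟨by linarith [hx.1, ht.2], hx.2.trans ht.2.le⟩
      rw [NormBV0.integ] at this
      rw [P.fund_pos t ⟨h0, ht.2.trans hr⟩, this, normHalfLine_of_nonneg h0,
        ← Iic_union_Ioc_eq_Iic h0, setIntegral_union (Iic_disjoint_Ioc le_rfl)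
        measurableSet_Ioc hw.integrableOn hw.integrableOn, integral_neg (f := fun x => σ x * x)
        (μ := μ.restrict (Ioc 0 t))]
      ring
    · have := key (Ico t 0) measurableSet_Ico
        (fun x hx => ⟨ht.1.le.trans hx.1, by linarith [hx.2, ht.1]⟩) (fun x => x) r measurable_id
        fun x hx => abs_le.2 ⟨ht.1.le.trans hx.1, by linarith [hx.2, ht.1]⟩
      rw [NormBV0.integ] at this
      rw [P.fund_neg t ⟨by linarith [ht.1], h0.le⟩, this, normHalfLine_of_neg h0,
        integral_Iic_eq_integral_Iio' hμ0, ← Iio_union_Ico_eq_Iio h0.le,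
        setIntegral_union ((Iio_disjoint_Ici le_rfl).mono_right Ico_subset_Ici_self)
        measurableSet_Ico hw.integrableOn hw.integrableOn, integral_neg (f := fun x => σ x * x)
        (μ := μ.restrict (Ico t 0))]
      ring

end NormBV0

section

variable {μ : Measure ℝ} {R w : ℝ → ℝ} {a b c : ℝ}

lemma rightLim_eq_add_setIntegral_Iic (hw : Integrable w μ)
    (hR : ∀ t ∈ Ioo a b, R t = c + ∫ x in normHalfLine t, w x ∂μ) {t : ℝ} (ht : t ∈ Ioo a b) :
    rightLim R t = c + ∫ x in Iic t, w x ∂μ := by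
  refine rightLim_eq_of_tendsto (((tendsto_setIntegral_nhdsGT hw measurableSet_normHalfLine
    Iio_subset_normHalfLine normHalfLine_subset_Iic t).const_add c).congr' ?_)
  filter_upwards [nhdsWithin_le_nhds (Ioo_mem_nhds ht.1 ht.2)] with u hu using (hR u hu).symm

lemma leftLim_eq_add_setIntegral_Iio (hw : Integrable w μ)
    (hR : ∀ t ∈ Ioo a b, R t = c + ∫ x in normHalfLine t, w x ∂μ) {t : ℝ} (ht : t ∈ Ioo a b) :
    leftLim R t = c + ∫ x in Iio t, w x ∂μ := by
  refine leftLim_eq_of_tendsto (((tendsto_setIntegral_nhdsLT hw measurableSet_normHalfLine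
    Iio_subset_normHalfLine normHalfLine_subset_Iic t).const_add c).congr' ?_)
  filter_upwards [nhdsWithin_le_nhds (Ioo_mem_nhds ht.1 ht.2)] with u hu using (hR u hu).symm

end

lemma exists_subset_Ioo_neg_of_isCompact {K : Set ℝ} (hK : IsCompact K) (hs : K ⊆ Ioo (-1) 1) :
    ∃ r < 1, K ⊆ Ioo (-r) r := by
  obtain ⟨r, hr, hKr⟩ : ∃ r < 1, K ⊆ Metric.ball 0 r :=
    exists_lt_subset_ball hK.isClosed (by simpa [Real.ball_eq_Ioo] using hs)
  exact ⟨r, hr, by simpa [Real.ball_eq_Ioo] using hKr⟩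

lemma NormBV0.integral_deriv_mul_eq_leftLim_rightLim (P Q : NormBV0) (φ : ℝ → ℝ)
    (hφ : ContDiff ℝ 1 φ) (hφc : HasCompactSupport φ) (hφs : tsupport φ ⊆ Ioo (-1 : ℝ) 1) :
    (∫ t in Ioo (-1 : ℝ) 1, deriv φ t * (P.R t * Q.R t)) =
      P.integ (Ioo (-1 : ℝ) 1) (fun t => φ t * t * leftLim Q.R t) +
        Q.integ (Ioo (-1 : ℝ) 1) (fun t => φ t * t * rightLim P.R t) := by
  obtain ⟨r, hr, hKr⟩ := exists_subset_Ioo_neg_of_isCompact hφc hφs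
  obtain ⟨μ, f, c, _, hfm, hf, hPint, hP⟩ := P.exists_density hr
  obtain ⟨ν, g, d, _, hgm, hg, hQint, hQ⟩ := Q.exists_density hr
  obtain ⟨C, hC⟩ := hφc.exists_bound_of_continuous hφ.continuous
  have hφ0 : ∀ x ∉ Ioo (-r) r, φ x = 0 := fun x hx =>
    image_eq_zero_of_notMem_tsupport fun h => hx (hKr h)
  have hφ'0 : ∀ x ∉ Ioo (-r) r, deriv φ x = 0 := fun x hx =>
    image_eq_zero_of_notMem_tsupport fun h => hx (hKr (tsupport_deriv_subset h))
  have hL : (fun t => φ t * t * leftLim Q.R t) =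
      fun t => φ t * (d + ∫ y in Iio t, g y ∂ν) * t := by
    ext t
    by_cases ht : t ∈ Ioo (-r) r
    · rw [leftLim_eq_add_setIntegral_Iio hg hQ ht, mul_right_comm]
    · simp [hφ0 t ht]
  have hR : (fun t => φ t * t * rightLim P.R t) =
      fun t => φ t * (c + ∫ y in Iic t, f y ∂μ) * t := by
    ext t
    by_cases ht : t ∈ Ioo (-r) r
    · rw [rightLim_eq_add_setIntegral_Iic hf hP ht, mul_right_comm]
    · simp [hφ0 t ht]
  have hbound (e I J : ℝ) (hI : ‖I‖ ≤ J) (x : ℝ) : ‖φ x * (e + I)‖ ≤ C * (‖e‖ + J) := by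
    rw [norm_mul]
    exact mul_le_mul (hC x) ((norm_add_le _ _).trans (by gcongr)) (norm_nonneg _)
      ((norm_nonneg _).trans (hC x))
  have hleft : (∫ t in Ioo (-1 : ℝ) 1, deriv φ t * (P.R t * Q.R t)) =
      ∫ t, deriv φ t * ((c + ∫ x in Iic t, f x ∂μ) * (d + ∫ y in Iic t, g y ∂ν)) := by
    rw [setIntegral_eq_integral_of_forall_compl_eq_zero]
    · refine integral_congr_ae ?_
      filter_upwards [ae_setIntegral_eq_setIntegral_Iic (μ := μ) (f := f)
        Iio_subset_normHalfLine normHalfLine_subset_Iic,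
        ae_setIntegral_eq_setIntegral_Iic (μ := ν) (f := g)
        Iio_subset_normHalfLine normHalfLine_subset_Iic] with t h₁ h₂
      by_cases ht : t ∈ Ioo (-r) r
      · rw [hP t ht, hQ t ht, h₁, h₂]
      · simp [hφ'0 t ht]
    · intro x hx
      rw [hφ'0 x fun h => hx (Ioo_subset_Ioo (by linarith) hr.le h), zero_mul]
  rw [hleft, hL, hR, integral_deriv_mul_add_setIntegral_Iic_mul hf hg hfm hgm hφ hφc,
    hPint (fun t => φ t * (d + ∫ y in Iio t, g y ∂ν)) _ (hφ.continuous.measurable.mul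
      (measurable_const.add (measurable_setIntegral_Iio hgm)))
      (fun x => hbound d _ _ (norm_setIntegral_le_integral_norm hg _) x)
      (fun x hx => by rw [hφ0 x fun h => hx (Ioo_subset_Icc_self h), zero_mul]),
    hQint (fun t => φ t * (c + ∫ y in Iic t, f y ∂μ)) _ (hφ.continuous.measurable.mul
      (measurable_const.add (measurable_setIntegral_Iic hfm)))
      (fun x => hbound c _ _ (norm_setIntegral_le_integral_norm hf _) x)
      (fun x hx => by rw [hφ0 x fun h => hx (Ioo_subset_Icc_self h), zero_mul]),
    sub_eq_add_neg]
  simp only [mul_right_comm]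

/-- Integration-by-parts identity for the product of two normalized
BV₀ pairs against a compactly supported `C¹` test function. -/
theorem bv0_product_rule (P Q : NormBV0) (φ : ℝ → ℝ) (hφ : ContDiff ℝ 1 φ)
    (hφc : HasCompactSupport φ) (hφs : tsupport φ ⊆ Set.Ioo (-1 : ℝ) 1) :
    (∫ t in Set.Ioo (-1 : ℝ) 1, deriv φ t * (P.R t * Q.R t)) =
        P.integ (Set.Ioo (-1 : ℝ) 1) (fun t => φ t * t * Function.leftLim Q.R t) +
          Q.integ (Set.Ioo (-1 : ℝ) 1) (fun t => φ t * t * Function.rightLim P.R t) ∧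
    (∫ t in Set.Ioo (-1 : ℝ) 1, deriv φ t * (P.R t * Q.R t)) =
        P.integ (Set.Ioo (-1 : ℝ) 1) (fun t => φ t * t * Function.rightLim Q.R t) +
          Q.integ (Set.Ioo (-1 : ℝ) 1) (fun t => φ t * t * Function.leftLim P.R t) := by
  refine ⟨P.integral_deriv_mul_eq_leftLim_rightLim Q φ hφ hφc hφs, ?_⟩
  rw [add_comm]
  simpa only [mul_comm (Q.R _)] using Q.integral_deriv_mul_eq_leftLim_rightLim P φ hφ hφc hφs
end

section
/- Let (R, ν) be a normalized BV₀ pair on (−1,1) such that inf_{t∈K} |R(t)| > 0 for every compact subset K ⊆ (−1,1). Then (1/R, ν_{1/R}) is a normalized BV₀ pair on (−1,1), where ν_{1/R} is the signed measure with dν_{1/R}(t) = −(R(t⁻)·R(t⁺))⁻¹ dν(t); explicitly, 1/R(t) = 1/R(0) + ∫_{(0,t]} s·(R(s⁻)R(s⁺))⁻¹ dν(s) for all t ∈ [0,1) and 1/R(t) = 1/R(0) − ∫_{[t,0)} s·(R(s⁻)R(s⁺))⁻¹ dν(s) for all t ∈ (−1,0]. -/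
open MeasureTheory Set Filter Function Topology

/-- Reflecting a function exchanges its one-sided limits. -/
theorem leftLim_comp_neg (f : ℝ → ℝ) (a : ℝ) :
    leftLim (fun x => f (-x)) a = rightLim f (-a) := by
  by_cases h : ∃ y, Tendsto f (𝓝[>] (-a)) (𝓝 y)
  · obtain ⟨y, hy⟩ := h
    rw [rightLim_eq_of_tendsto hy]
    exact leftLim_eq_of_tendsto (hy.comp tendsto_neg_nhdsLT)
  · rw [rightLim_eq_of_not_tendsto f h]
    refine leftLim_eq_of_not_tendsto _ fun ⟨y, hy⟩ => h ⟨y, ?_⟩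
    simpa [Function.comp_def] using hy.comp tendsto_neg_nhdsGT_neg

/-- Reflecting a function exchanges its one-sided limits. -/
theorem rightLim_comp_neg (f : ℝ → ℝ) (a : ℝ) :
    rightLim (fun x => f (-x)) a = leftLim f (-a) := by
  have h := leftLim_comp_neg (fun x => f (-x)) (-a)
  simpa using h.symm

theorem integrableOn_id_Ioc {μ : Measure ℝ} {c : ℝ} (hμ : μ (Ioc 0 c) ≠ ⊤) :
    IntegrableOn (fun u : ℝ => u) (Ioc 0 c) μ := by
  refine IntegrableOn.of_bound hμ.lt_top measurable_id.aestronglyMeasurable c ?_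
  filter_upwards [ae_restrict_mem measurableSet_Ioc] with u hu
  simpa [abs_of_pos hu.1] using hu.2

/-- Convergence of the primitives `x ↦ ∫ u in (0, x], u ∂μ` when the intervals `(0, x]` converge
pointwise to a set `S`. -/
theorem tendsto_setIntegral_Ioc_of_eventually_mem_iff {μ : Measure ℝ} {c : ℝ}
    (hμ : μ (Ioc 0 c) ≠ ⊤) {l : Filter ℝ} [l.IsCountablyGenerated] {S : Set ℝ}
    (hl : ∀ᶠ x in l, x ≤ c) (hlS : ∀ u, ∀ᶠ x in l, (u ∈ Ioc 0 x ↔ u ∈ S)) :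
    Tendsto (fun x => ∫ u in Ioc 0 x, u ∂μ) l
      (𝓝 (∫ u in Ioc 0 c, S.indicator (fun u => u) u ∂μ)) := by
  have key : Tendsto (fun x => ∫ u in Ioc 0 c, (Ioc 0 x).indicator (fun u => u) u ∂μ) l
      (𝓝 (∫ u in Ioc 0 c, S.indicator (fun u => u) u ∂μ)) := by
    refine tendsto_integral_filter_of_dominated_convergence (fun u => ‖u‖)
      (Eventually.of_forall fun x =>
        (measurable_id.indicator measurableSet_Ioc).aestronglyMeasurable)
      (Eventually.of_forall fun x => Eventually.of_forall fun u => norm_indicator_le_norm_self _ _)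
      (integrableOn_id_Ioc hμ).norm (Eventually.of_forall fun u => ?_)
    refine tendsto_const_nhds.congr' ?_
    filter_upwards [hlS u] with x hx
    by_cases hu : u ∈ S <;> simp [indicator, hu, hx]
  refine key.congr' ?_
  filter_upwards [hl] with x hx
  rw [setIntegral_indicator measurableSet_Ioc,
    inter_eq_self_of_subset_right (Ioc_subset_Ioc_right hx)]

theorem exists_tendsto_setIntegral_Ioc_nhdsLT {μ : Measure ℝ} {c s : ℝ}
    (hμ : μ (Ioc 0 c) ≠ ⊤) (hs : s ≤ c) :
    ∃ y, Tendsto (fun x => ∫ u in Ioc 0 x, u ∂μ) (𝓝[<] s) (𝓝 y) := by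
  refine ⟨_, tendsto_setIntegral_Ioc_of_eventually_mem_iff (S := Ioo 0 s) hμ ?_ fun u => ?_⟩
  · filter_upwards [self_mem_nhdsWithin] with x hx using hx.le.trans hs
  · rcases lt_or_ge u s with hu | hu
    · filter_upwards [Ioo_mem_nhdsLT hu] with x hx
      simp [hu, hx.1.le]
    · filter_upwards [self_mem_nhdsWithin] with x hx
      simp [hu.not_gt, (lt_of_lt_of_le hx hu).not_ge]

theorem exists_tendsto_setIntegral_Ioc_nhdsGE {μ : Measure ℝ} {c s : ℝ}
    (hμ : μ (Ioc 0 c) ≠ ⊤) (hs : s < c) :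
    ∃ y, Tendsto (fun x => ∫ u in Ioc 0 x, u ∂μ) (𝓝[≥] s) (𝓝 y) := by
  refine ⟨_, tendsto_setIntegral_Ioc_of_eventually_mem_iff (S := Ioc 0 s) hμ ?_ fun u => ?_⟩
  · filter_upwards [Ico_mem_nhdsGE hs] with x hx using hx.2.le
  · rcases le_or_gt u s with hu | hu
    · filter_upwards [self_mem_nhdsWithin] with x hx
      simp [hu, hu.trans hx]
    · filter_upwards [Ico_mem_nhdsGE hu] with x hx
      simp [hu.not_ge, hx.2.not_ge]

/-- The step function of mesh `δ` taking the value `(F ((k - 1) δ) * F (k δ))⁻¹` on the cell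
`((k - 1) δ, k δ]`. -/
noncomputable def gridInv (F : ℝ → ℝ) (δ s : ℝ) : ℝ :=
  (F (((⌈s / δ⌉₊ : ℝ) - 1) * δ) * F ((⌈s / δ⌉₊ : ℝ) * δ))⁻¹

theorem measurable_gridInv (F : ℝ → ℝ) (δ : ℝ) : Measurable (gridInv F δ) :=
  (measurable_from_nat (f := fun k : ℕ => (F (((k : ℝ) - 1) * δ) * F ((k : ℝ) * δ))⁻¹)).comp
    (Nat.measurable_ceil.comp (measurable_id.div_const δ))

/-- Every `s > 0` lies in its grid cell, whose left endpoint is nonnegative. -/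
theorem grid_bounds {δ s : ℝ} (hδ : 0 < δ) (hs : 0 < s) :
    0 ≤ ((⌈s / δ⌉₊ : ℝ) - 1) * δ ∧ ((⌈s / δ⌉₊ : ℝ) - 1) * δ < s ∧
      s ≤ (⌈s / δ⌉₊ : ℝ) * δ := by
  have h1 : s / δ ≤ ⌈s / δ⌉₊ := Nat.le_ceil _
  have h2 : (⌈s / δ⌉₊ : ℝ) < s / δ + 1 := Nat.ceil_lt_add_one (by positivity)
  have h3 : 1 ≤ ⌈s / δ⌉₊ := Nat.one_le_ceil_iff.2 (by positivity)
  have h4 : (1 : ℝ) ≤ ⌈s / δ⌉₊ := by exact_mod_cast h3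
  refine ⟨mul_nonneg (by linarith) hδ.le, ?_, (div_le_iff₀ hδ).1 h1⟩
  rw [← lt_div_iff₀ hδ]
  linarith

theorem gridInv_of_mem_Ioc (F : ℝ → ℝ) {δ s : ℝ} (hδ : 0 < δ) (k : ℕ)
    (hs : s ∈ Ioc ((k : ℝ) * δ) (((k + 1 : ℕ) : ℝ) * δ)) :
    gridInv F δ s = (F ((k : ℝ) * δ) * F (((k + 1 : ℕ) : ℝ) * δ))⁻¹ := by
  have h : ⌈s / δ⌉₊ = k + 1 := by
    rw [Nat.ceil_eq_iff (by simp)]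
    refine ⟨?_, (div_le_iff₀ hδ).2 hs.2⟩
    rw [lt_div_iff₀ hδ]
    simpa using hs.1
  simp [gridInv, h]

/-- The grid functions converge pointwise to the inverse of the product of one-sided limits. -/
theorem tendsto_gridInv {F : ℝ → ℝ} {δ : ℕ → ℝ} (hδ : ∀ n, 0 < δ n)
    (hδ0 : Tendsto δ atTop (𝓝 0)) {s L U : ℝ} (hs : 0 < s)
    (hL : Tendsto F (𝓝[<] s) (𝓝 L)) (hU : Tendsto F (𝓝[≥] s) (𝓝 U)) (hL0 : L ≠ 0)
    (hU0 : U ≠ 0) :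
    Tendsto (fun n => gridInv F (δ n) s) atTop (𝓝 (L * U)⁻¹) := by
  have hb := fun n => grid_bounds (hδ n) hs
  refine Tendsto.inv₀ (Tendsto.mul (hL.comp ?_) (hU.comp ?_)) (mul_ne_zero hL0 hU0)
  · refine tendsto_nhdsWithin_iff.2 ⟨?_, Eventually.of_forall fun n => (hb n).2.1⟩
    refine tendsto_of_tendsto_of_tendsto_of_le_of_le (g := fun n => s - δ n) (h := fun _ => s)
      (by simpa using hδ0.const_sub s) tendsto_const_nhds (fun n => ?_) (fun n => (hb n).2.1.le)
    have := (hb n).2.2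
    simp only
    linarith
  · refine tendsto_nhdsWithin_iff.2 ⟨?_, Eventually.of_forall fun n => (hb n).2.2⟩
    refine tendsto_of_tendsto_of_tendsto_of_le_of_le (g := fun _ => s) (h := fun n => s + δ n)
      tendsto_const_nhds (by simpa using hδ0.const_add s) (fun n => (hb n).2.2) (fun n => ?_)
    have := (hb n).2.1
    simp only
    linarith

/-- With mesh `t / (n + 1)`, the grid function is bounded on `(0, t]` by a lower bound for `|F|` on
`[0, t]`. -/
theorem abs_gridInv_le {F : ℝ → ℝ} {t ε s : ℝ} (n : ℕ) (hε : 0 < ε)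
    (hF : ∀ x ∈ Icc 0 t, ε ≤ |F x|) (hs : s ∈ Ioc 0 t) :
    |gridInv F (t / (n + 1 : ℕ)) s| ≤ (ε * ε)⁻¹ := by
  have ht : 0 < t := hs.1.trans_le hs.2
  have hn : (0 : ℝ) < (n + 1 : ℕ) := by positivity
  have hδ : 0 < t / (n + 1 : ℕ) := by positivity
  obtain ⟨h0, h1, h2⟩ := grid_bounds hδ hs.1
  have h3 : ⌈s / (t / (n + 1 : ℕ))⌉₊ ≤ n + 1 := by
    refine Nat.ceil_le.2 ?_
    rw [div_le_iff₀ hδ, mul_div_cancel₀ _ hn.ne']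
    exact hs.2
  have h4 : (⌈s / (t / (n + 1 : ℕ))⌉₊ : ℝ) * (t / (n + 1 : ℕ)) ≤ t := by
    calc _ ≤ ((n + 1 : ℕ) : ℝ) * (t / (n + 1 : ℕ)) := by gcongr
      _ = t := mul_div_cancel₀ _ hn.ne'
  rw [gridInv, abs_inv, abs_mul]
  gcongr
  · exact hF _ ⟨h0, h1.le.trans hs.2⟩
  · exact hF _ ⟨hs.1.le.trans h2, h4⟩

/-- The integral of a grid function against `s dμ(s)` is a Riemann-type sum. -/
theorem setIntegral_mul_gridInv {F : ℝ → ℝ} {μ : Measure ℝ} {t ε : ℝ} (n : ℕ) (ht : 0 < t)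
    (hε : 0 < ε) (hF : ∀ x ∈ Icc 0 t, ε ≤ |F x|) (hμ : μ (Ioc 0 t) ≠ ⊤) :
    ∫ s in Ioc 0 t, s * gridInv F (t / (n + 1 : ℕ)) s ∂μ =
      ∑ k ∈ Finset.range (n + 1),
        (F ((k : ℝ) * (t / (n + 1 : ℕ))) * F (((k + 1 : ℕ) : ℝ) * (t / (n + 1 : ℕ))))⁻¹ *
          ∫ s in Ioc ((k : ℝ) * (t / (n + 1 : ℕ))) (((k + 1 : ℕ) : ℝ) * (t / (n + 1 : ℕ))),
            s ∂μ := by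
  set δ := t / (n + 1 : ℕ) with hδdef
  have hn : (0 : ℝ) < (n + 1 : ℕ) := by positivity
  have hδ : 0 < δ := by positivity
  have htop : ((n + 1 : ℕ) : ℝ) * δ = t := mul_div_cancel₀ _ hn.ne'
  have hmono : ∀ k : ℕ, (k : ℝ) * δ ≤ ((k + 1 : ℕ) : ℝ) * δ := fun k => by gcongr; simp
  have hint : IntegrableOn (fun s => s * gridInv F δ s) (Ioc 0 t) μ := by
    refine (integrableOn_id_Ioc hμ).mul_bdd (c := (ε * ε)⁻¹)
      (measurable_gridInv F δ).aestronglyMeasurable ?_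
    filter_upwards [ae_restrict_mem measurableSet_Ioc] with s hs
    exact abs_gridInv_le n hε hF hs
  have hsum := intervalIntegral.sum_integral_adjacent_intervals (μ := μ)
    (f := fun s => s * gridInv F δ s) (a := fun k : ℕ => (k : ℝ) * δ) (n := n + 1)
    (fun k hk => by
      rw [intervalIntegrable_iff_integrableOn_Ioc_of_le (hmono k)]
      refine hint.mono_set (Ioc_subset_Ioc (by positivity) ?_)
      rw [← htop]
      gcongr
      exact Nat.lt_succ_iff.1 hk)
  simp only [Nat.cast_zero, zero_mul] at hsum
  rw [htop, intervalIntegral.integral_of_le ht.le] at hsum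
  rw [← hsum]
  refine Finset.sum_congr rfl fun k _ => ?_
  rw [intervalIntegral.integral_of_le (hmono k), ← integral_const_mul]
  refine setIntegral_congr_fun measurableSet_Ioc fun s hs => ?_
  rw [gridInv_of_mem_Ioc F hδ k hs, mul_comm]

/-- The inverse formula on a half-line: if `R` decreases by `∫ s d(μ₁ - μ₂)(s)` and is bounded
away from zero on compact subsets of `[0, 1)`, then `R⁻¹` is again such a primitive, with density
`(R(s⁻) R(s⁺))⁻¹`. -/
theorem inv_eq_of_primitive {R : ℝ → ℝ} {μ₁ μ₂ : Measure ℝ}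
    (h₁ : ∀ c ∈ Ico (0 : ℝ) 1, μ₁ (Ioc 0 c) ≠ ⊤) (h₂ : ∀ c ∈ Ico (0 : ℝ) 1, μ₂ (Ioc 0 c) ≠ ⊤)
    (hR : ∀ c ∈ Ico (0 : ℝ) 1, ∃ ε > (0 : ℝ), ∀ x ∈ Icc 0 c, ε ≤ |R x|)
    (hfund : ∀ t ∈ Ico (0 : ℝ) 1,
      R t = R 0 - ((∫ s in Ioc (0 : ℝ) t, s ∂μ₁) - (∫ s in Ioc (0 : ℝ) t, s ∂μ₂)))
    {t : ℝ} (ht : t ∈ Ico (0 : ℝ) 1) :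
    IntegrableOn (fun s => (leftLim R s * rightLim R s)⁻¹) (Ioc 0 t) μ₁ ∧
    IntegrableOn (fun s => (leftLim R s * rightLim R s)⁻¹) (Ioc 0 t) μ₂ ∧
    (R t)⁻¹ = (R 0)⁻¹ + ((∫ s in Ioc 0 t, s * (leftLim R s * rightLim R s)⁻¹ ∂μ₁) -
      ∫ s in Ioc 0 t, s * (leftLim R s * rightLim R s)⁻¹ ∂μ₂) := by
  rcases ht.1.eq_or_lt with rfl | ht0
  · simp
  obtain ⟨c, htc, hc1⟩ := exists_between ht.2
  have hc : c ∈ Ico (0 : ℝ) 1 := ⟨(ht0.trans htc).le, hc1⟩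
  obtain ⟨ε, hε, hεR⟩ := hR t ht
  have hne : ∀ x ∈ Icc 0 t, R x ≠ 0 := fun x hx => abs_pos.1 (hε.trans_le (hεR x hx))
  -- one-sided limits
  have hleft : ∀ s ∈ Ioc 0 t, Tendsto R (𝓝[<] s) (𝓝 (leftLim R s)) := by
    intro s hs
    obtain ⟨y₁, hy₁⟩ := exists_tendsto_setIntegral_Ioc_nhdsLT (h₁ c hc) (hs.2.trans htc.le)
    obtain ⟨y₂, hy₂⟩ := exists_tendsto_setIntegral_Ioc_nhdsLT (h₂ c hc) (hs.2.trans htc.le)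
    refine tendsto_leftLim_of_tendsto
      ⟨R 0 - (y₁ - y₂), ((hy₁.sub hy₂).const_sub (R 0)).congr' ?_⟩
    filter_upwards [Ioo_mem_nhdsLT hs.1] with x hx
    exact (hfund x ⟨hx.1.le, (hx.2.trans_le hs.2).trans ht.2⟩).symm
  have hright : ∀ s ∈ Ioc 0 t, ContinuousWithinAt R (Ici s) s := by
    intro s hs
    obtain ⟨y₁, hy₁⟩ := exists_tendsto_setIntegral_Ioc_nhdsGE (h₁ c hc) (hs.2.trans_lt htc)
    obtain ⟨y₂, hy₂⟩ := exists_tendsto_setIntegral_Ioc_nhdsGE (h₂ c hc) (hs.2.trans_lt htc)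
    have h : Tendsto R (𝓝[≥] s) (𝓝 (R 0 - (y₁ - y₂))) := by
      refine ((hy₁.sub hy₂).const_sub (R 0)).congr' ?_
      filter_upwards [Ico_mem_nhdsGE (hs.2.trans_lt htc)] with x hx
      exact (hfund x ⟨hs.1.le.trans hx.1, hx.2.trans hc1⟩).symm
    have hval : R s = R 0 - (y₁ - y₂) :=
      tendsto_nhds_unique (tendsto_pure_nhds R s) (h.mono_left (pure_le_nhdsWithin self_mem_Ici))
    rw [ContinuousWithinAt, hval]
    exact h
  have hlne : ∀ s ∈ Ioc 0 t, leftLim R s ≠ 0 := by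
    intro s hs
    refine abs_pos.1 (hε.trans_le (ge_of_tendsto (hleft s hs).abs ?_))
    filter_upwards [Ioo_mem_nhdsLT hs.1] with x hx using hεR x ⟨hx.1.le, hx.2.le.trans hs.2⟩
  -- convergence of the grid functions
  have hδ : ∀ n : ℕ, 0 < t / (n + 1 : ℕ) := fun n => by positivity
  have hδ0 : Tendsto (fun n : ℕ => t / (n + 1 : ℕ)) atTop (𝓝 0) :=
    (tendsto_const_div_atTop_nhds_zero_nat t).comp (tendsto_add_atTop_nat 1)
  have hlim : ∀ s ∈ Ioc 0 t, Tendsto (fun n : ℕ => gridInv R (t / (n + 1 : ℕ)) s) atTop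
      (𝓝 (leftLim R s * rightLim R s)⁻¹) := by
    intro s hs
    have hs' : rightLim R s = R s := (hright s hs).rightLim_eq
    rw [hs']
    exact tendsto_gridInv hδ hδ0 hs.1 (hleft s hs) (hright s hs) (hlne s hs)
      (hne s ⟨hs.1.le, hs.2⟩)
  have hintegrable : ∀ μ : Measure ℝ, μ (Ioc 0 t) ≠ ⊤ →
      IntegrableOn (fun s => (leftLim R s * rightLim R s)⁻¹) (Ioc 0 t) μ := by
    intro μ hμ
    refine IntegrableOn.of_bound hμ.lt_top (aestronglyMeasurable_of_tendsto_ae atTop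
      (f := fun n : ℕ => gridInv R (t / (n + 1 : ℕ)))
      (fun n => (measurable_gridInv R _).aestronglyMeasurable) ?_) (ε * ε)⁻¹ ?_
    · filter_upwards [ae_restrict_mem measurableSet_Ioc] with s hs using hlim s hs
    · filter_upwards [ae_restrict_mem measurableSet_Ioc] with s hs
      exact le_of_tendsto (hlim s hs).abs
        (Eventually.of_forall fun n => abs_gridInv_le n hε hεR hs)
  have hconv : ∀ μ : Measure ℝ, μ (Ioc 0 t) ≠ ⊤ →
      Tendsto (fun n : ℕ => ∫ s in Ioc 0 t, s * gridInv R (t / (n + 1 : ℕ)) s ∂μ) atTop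
        (𝓝 (∫ s in Ioc 0 t, s * (leftLim R s * rightLim R s)⁻¹ ∂μ)) := by
    intro μ hμ
    refine tendsto_integral_of_dominated_convergence (fun s => ‖s‖ * (ε * ε)⁻¹)
      (fun n => (measurable_id.mul (measurable_gridInv R _)).aestronglyMeasurable)
      ((integrableOn_id_Ioc hμ).norm.mul_const _) (fun n => ?_) ?_
    · filter_upwards [ae_restrict_mem measurableSet_Ioc] with s hs
      rw [norm_mul]
      gcongr
      exact abs_gridInv_le n hε hεR hs
    · filter_upwards [ae_restrict_mem measurableSet_Ioc] with s hs
      exact (hlim s hs).const_mul s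
  -- the increments of `R`
  have hinc : ∀ a b, 0 ≤ a → a ≤ b → b ≤ t →
      (∫ s in Ioc a b, s ∂μ₁) - (∫ s in Ioc a b, s ∂μ₂) = R a - R b := by
    intro a b ha hab hb
    have hsplit : ∀ μ : Measure ℝ, μ (Ioc 0 t) ≠ ⊤ →
        ∫ s in Ioc 0 b, s ∂μ = (∫ s in Ioc 0 a, s ∂μ) + ∫ s in Ioc a b, s ∂μ := by
      intro μ hμ
      have hi := integrableOn_id_Ioc hμ
      rw [← Ioc_union_Ioc_eq_Ioc ha hab]
      exact setIntegral_union (Ioc_disjoint_Ioc_of_le le_rfl) measurableSet_Ioc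
        (hi.mono_set (Ioc_subset_Ioc_right (hab.trans hb)))
        (hi.mono_set (Ioc_subset_Ioc ha hb))
    rw [hfund a ⟨ha, (hab.trans hb).trans_lt ht.2⟩,
      hfund b ⟨ha.trans hab, hb.trans_lt ht.2⟩, hsplit μ₁ (h₁ t ht), hsplit μ₂ (h₂ t ht)]
    ring
  have hgrid : ∀ n : ℕ, (∫ s in Ioc 0 t, s * gridInv R (t / (n + 1 : ℕ)) s ∂μ₁) -
      (∫ s in Ioc 0 t, s * gridInv R (t / (n + 1 : ℕ)) s ∂μ₂) = (R t)⁻¹ - (R 0)⁻¹ := by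
    intro n
    have hn : (0 : ℝ) < (n + 1 : ℕ) := by positivity
    rw [setIntegral_mul_gridInv n ht0 hε hεR (h₁ t ht),
      setIntegral_mul_gridInv n ht0 hε hεR (h₂ t ht), ← Finset.sum_sub_distrib]
    have hδn := hδ n
    have htop : ((n + 1 : ℕ) : ℝ) * (t / (n + 1 : ℕ)) = t := mul_div_cancel₀ _ hn.ne'
    set δ := t / (n + 1 : ℕ)
    have htel := Finset.sum_range_sub (fun k : ℕ => (R ((k : ℝ) * δ))⁻¹) (n + 1)
    rw [htop, Nat.cast_zero, zero_mul] at htel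
    rw [← htel]
    refine Finset.sum_congr rfl fun k hk => ?_
    have hk0 : 0 ≤ (k : ℝ) * δ := by positivity
    have hk1 : (k : ℝ) * δ ≤ ((k + 1 : ℕ) : ℝ) * δ := by gcongr; simp
    have hk2 : ((k + 1 : ℕ) : ℝ) * δ ≤ t := by
      rw [← htop]
      gcongr
      exact Nat.lt_succ_iff.1 (Finset.mem_range.1 hk)
    rw [← mul_sub, hinc _ _ hk0 hk1 hk2]
    have hx := hne _ ⟨hk0, hk1.trans hk2⟩
    have hy := hne _ ⟨hk0.trans hk1, hk2⟩
    rw [inv_sub_inv hy hx, mul_comm (R (((k + 1 : ℕ) : ℝ) * δ)), div_eq_inv_mul]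
  refine ⟨hintegrable μ₁ (h₁ t ht), hintegrable μ₂ (h₂ t ht), ?_⟩
  have hlimit := (hconv μ₁ (h₁ t ht)).sub (hconv μ₂ (h₂ t ht))
  simp only [hgrid] at hlimit
  rw [← tendsto_nhds_unique tendsto_const_nhds hlimit]
  ring

theorem setIntegral_Ioc_map_neg (μ : Measure ℝ) (t : ℝ) (f : ℝ → ℝ) :
    ∫ s in Ioc 0 t, f s ∂(μ.map Neg.neg) = ∫ s in Ico (-t) 0, f (-s) ∂μ := by
  refine ((MeasurableEquiv.neg ℝ).measurableEmbedding.setIntegral_map f (Ioc 0 t)).trans ?_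
  simp

/-- If `inf_K |R| > 0` on every compact `K ⊆ (-1,1)`, then
`(1/R, ν_{1/R})` with `dν_{1/R}(t) = -(R(t⁻)R(t⁺))⁻¹ dν(t)` is again a normalized BV₀
pair: the density is locally `ν`-integrable (so `ν_{1/R}` is a locally finite signed
Borel measure giving no mass to `{0}`), and the fundamental relations
`1/R(t) = 1/R(0) + ∫_{(0,t]} s (R(s⁻)R(s⁺))⁻¹ dν(s)` for `t ∈ [0,1)` and
`1/R(t) = 1/R(0) - ∫_{[t,0)} s (R(s⁻)R(s⁺))⁻¹ dν(s)` for `t ∈ (-1,0]` hold. -/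
theorem bv0_inverse (P : NormBV0)
    (hR : ∀ K : Set ℝ, IsCompact K → K ⊆ Set.Ioo (-1 : ℝ) 1 →
      ∃ ε > (0 : ℝ), ∀ t ∈ K, ε ≤ |P.R t|) :
    (∀ K : Set ℝ, IsCompact K → K ⊆ Set.Ioo (-1 : ℝ) 1 →
      MeasureTheory.IntegrableOn
        (fun t => (Function.leftLim P.R t * Function.rightLim P.R t)⁻¹) K (P.νp + P.νm)) ∧
    (∀ t ∈ Set.Ico (0 : ℝ) 1,
      (P.R t)⁻¹ = (P.R 0)⁻¹ +
        P.integ (Set.Ioc 0 t)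
          (fun s => s * (Function.leftLim P.R s * Function.rightLim P.R s)⁻¹)) ∧
    (∀ t ∈ Set.Ioc (-1 : ℝ) 0,
      (P.R t)⁻¹ = (P.R 0)⁻¹ -
        P.integ (Set.Ico t 0)
          (fun s => s * (Function.leftLim P.R s * Function.rightLim P.R s)⁻¹)) := by
  have hIcc : ∀ c ∈ Ico (0 : ℝ) 1, Icc (-c) c ⊆ Ioo (-1 : ℝ) 1 := fun c hc x hx =>
    ⟨by linarith [hc.2, hx.1], hx.2.trans_lt hc.2⟩
  have hpos := fun t ht => inv_eq_of_primitive (R := P.R) (μ₁ := P.νp) (μ₂ := P.νm)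
    (fun c hc => measure_ne_top_of_subset (Ioc_subset_Icc_self.trans
      (Icc_subset_Icc_left (by linarith [hc.1]))) (P.locfin_p _ isCompact_Icc (hIcc c hc)))
    (fun c hc => measure_ne_top_of_subset (Ioc_subset_Icc_self.trans
      (Icc_subset_Icc_left (by linarith [hc.1]))) (P.locfin_m _ isCompact_Icc (hIcc c hc)))
    (fun c hc => by
      obtain ⟨ε, hε, h⟩ := hR _ isCompact_Icc (hIcc c hc)
      exact ⟨ε, hε, fun x hx => h x ⟨by linarith [hc.1, hx.1], hx.2⟩⟩)
    P.fund_pos (t := t) ht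
  have hfin : ∀ μ : Measure ℝ, (∀ K, IsCompact K → K ⊆ Ioo (-1 : ℝ) 1 → μ K ≠ ⊤) →
      ∀ c ∈ Ico (0 : ℝ) 1, μ.map Neg.neg (Ioc 0 c) ≠ ⊤ := by
    intro μ hμ c hc
    rw [Measure.map_apply measurable_neg measurableSet_Ioc]
    refine measure_ne_top_of_subset (fun x hx => ?_) (hμ _ isCompact_Icc (hIcc c hc))
    have h1 := hx.1
    have h2 := hx.2
    exact ⟨by linarith, by linarith [hc.1]⟩
  have hneg := fun t ht => inv_eq_of_primitive (R := fun x => P.R (-x))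
    (μ₁ := P.νp.map Neg.neg) (μ₂ := P.νm.map Neg.neg) (hfin _ P.locfin_p) (hfin _ P.locfin_m)
    (fun c hc => by
      obtain ⟨ε, hε, h⟩ := hR _ isCompact_Icc (hIcc c hc)
      exact ⟨ε, hε, fun x hx => h _ ⟨by linarith [hx.2], by linarith [hc.1, hx.1]⟩⟩)
    (fun t ht => by
      rw [setIntegral_Ioc_map_neg, setIntegral_Ioc_map_neg,
        P.fund_neg (-t) ⟨by linarith [ht.2], by linarith [ht.1]⟩, integral_neg, integral_neg,
        neg_zero]
      ring) (t := t) ht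
  simp only [leftLim_comp_neg, rightLim_comp_neg, setIntegral_Ioc_map_neg, neg_neg, neg_zero,
    neg_mul, integral_neg] at hneg
  refine ⟨fun K hK hKI => ?_, fun t ht => (hpos t ht).2.2, fun t ht => ?_⟩
  · obtain ⟨c, hc, hKc⟩ : ∃ c ∈ Ico (0 : ℝ) 1, K ⊆ Icc (-c) c := by
      rcases K.eq_empty_or_nonempty with rfl | hne
      · exact ⟨0, by simp, empty_subset _⟩
      obtain ⟨x, hx, hmax⟩ := hK.exists_isMaxOn hne continuous_abs.continuousOn
      exact ⟨|x|, ⟨abs_nonneg x, abs_lt.2 (hKI hx)⟩, fun y hy => abs_le.1 (hmax hy)⟩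
    have hmain : ∀ μ : Measure ℝ, μ {0} = 0 →
        IntegrableOn (fun s => (leftLim P.R s * rightLim P.R s)⁻¹) (Ioc 0 c) μ →
        IntegrableOn (fun s => (rightLim P.R (-s) * leftLim P.R (-s))⁻¹) (Ioc 0 c)
          (μ.map Neg.neg) →
        IntegrableOn (fun s => (leftLim P.R s * rightLim P.R s)⁻¹) K μ := by
      intro μ h0 hp hn
      have hn' : IntegrableOn (fun s => (leftLim P.R s * rightLim P.R s)⁻¹) (Ico (-c) 0) μ := by
        have h := ((MeasurableEquiv.neg ℝ).measurableEmbedding.integrableOn_map_iff).1 hn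
        simpa [Function.comp_def, mul_comm] using h
      have hz : IntegrableOn (fun s => (leftLim P.R s * rightLim P.R s)⁻¹) {0} μ :=
        IntegrableOn.of_measure_zero h0
      refine ((hn'.union hz).union hp).mono_set fun x hx => ?_
      obtain ⟨hx1, hx2⟩ := hKc hx
      rcases lt_trichotomy x 0 with h | h | h
      · exact Or.inl (Or.inl ⟨hx1, h⟩)
      · exact Or.inl (Or.inr h)
      · exact Or.inr ⟨h, hx2⟩
    exact (hmain _ P.zero_p (hpos c hc).1 (hneg c hc).1).add_measure
      (hmain _ P.zero_m (hpos c hc).2.1 (hneg c hc).2.1)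
  · have h := (hneg (-t) ⟨by linarith [ht.2], by linarith [ht.1]⟩).2.2
    rw [neg_neg] at h
    rw [h, NormBV0.integ]
    simp only [mul_comm (rightLim P.R _)]
    ring
end

section
/- Let (R, ν) be a normalized BV₀ pair on (−1,1) and let f : (−1,1) → ℝ be continuous. Then the transform T_{R,ν}f is continuous on (−1,1). -/
open MeasureTheory Set Filter Function Topology

/-- The kernel `t f(s) - s f(t)`, supported on the `s` between `0` and `t`, with the orientation
for which `T f t = R 0 * f t + ∫ bv0Kernel f t s dν(s)`. -/
noncomputable def bv0Kernel (f : ℝ → ℝ) (t s : ℝ) : ℝ :=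
  (Ioc 0 t).indicator (fun s => t * f s - s * f t) s +
    (Ico t 0).indicator (fun s => s * f t - t * f s) s

lemma integrableOn_of_continuousOn_Ioo {μ : Measure ℝ} {g : ℝ → ℝ} {a b c d : ℝ}
    (hμ : ∀ K : Set ℝ, IsCompact K → K ⊆ Ioo a b → μ K ≠ ⊤)
    (hg : ContinuousOn g (Ioo a b)) (hc : a < c) (hd : d < b) :
    IntegrableOn g (Icc c d) μ := by
  have hsub : Icc c d ⊆ Ioo a b := fun x hx => ⟨hc.trans_le hx.1, hx.2.trans_lt hd⟩
  have hg' := hg.mono hsub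
  obtain ⟨M, hM⟩ := isCompact_Icc.exists_bound_of_continuousOn hg'
  exact IntegrableOn.of_bound (hμ _ isCompact_Icc hsub).lt_top
    (hg'.aestronglyMeasurable measurableSet_Icc) M
    ((ae_restrict_iff' measurableSet_Icc).2 (Eventually.of_forall hM))

lemma aestronglyMeasurable_bv0Kernel {μ : Measure ℝ} {f : ℝ → ℝ}
    (hf : ContinuousOn f (Ioo (-1) 1)) {t : ℝ} (ht : t ∈ Ioo (-1 : ℝ) 1) :
    AEStronglyMeasurable (bv0Kernel f t) μ := by
  unfold bv0Kernel
  refine AEStronglyMeasurable.add ?_ ?_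
  · refine (aestronglyMeasurable_indicator_iff measurableSet_Ioc).2
      (ContinuousOn.aestronglyMeasurable ?_ measurableSet_Ioc)
    have hft : ContinuousOn f (Ioc 0 t) :=
      hf.mono fun x hx => ⟨by linarith [hx.1], hx.2.trans_lt ht.2⟩
    fun_prop
  · refine (aestronglyMeasurable_indicator_iff measurableSet_Ico).2
      (ContinuousOn.aestronglyMeasurable ?_ measurableSet_Ico)
    have hft : ContinuousOn f (Ico t 0) :=
      hf.mono fun x hx => ⟨ht.1.trans_le hx.1, by linarith [hx.2]⟩
    fun_prop

lemma continuousOn_bv0Kernel {f : ℝ → ℝ} (hf : ContinuousOn f (Ioo (-1) 1)) {s : ℝ}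
    (hs : s ∈ Ioo (-1 : ℝ) 1) : ContinuousOn (fun t => bv0Kernel f t s) (Ioo (-1) 1) := by
  rcases lt_trichotomy s 0 with h | rfl | h
  · have hmin : ContinuousOn (fun t => f (min t s)) (Ioo (-1) 1) :=
      hf.comp (by fun_prop) fun t ht => ⟨lt_min ht.1 hs.1, (min_le_right _ _).trans_lt hs.2⟩
    have hcont : ContinuousOn (fun t => s * f (min t s) - min t s * f s) (Ioo (-1) 1) :=
      (continuousOn_const.mul hmin).sub (by fun_prop)
    refine hcont.congr fun t _ => ?_
    rcases le_or_gt t s with hts | hts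
    · simp [bv0Kernel, indicator, h, hts, h.not_gt]
    · simp [bv0Kernel, indicator, hts.le, hts.not_ge, h.not_gt]
  · simpa [bv0Kernel] using continuousOn_const
  · have hmax : ContinuousOn (fun t => f (max t s)) (Ioo (-1) 1) :=
      hf.comp (by fun_prop) fun t ht => ⟨ht.1.trans_le (le_max_left _ _), max_lt ht.2 hs.2⟩
    have hcont : ContinuousOn (fun t => max t s * f s - s * f (max t s)) (Ioo (-1) 1) :=
      ContinuousOn.sub (by fun_prop) (continuousOn_const.mul hmax)
    refine hcont.congr fun t _ => ?_
    rcases le_or_gt s t with hts | hts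
    · simp [bv0Kernel, indicator, h, hts, h.not_gt]
    · simp [bv0Kernel, indicator, hts.le, hts.not_ge, h.not_gt]

lemma abs_mul_sub_mul_le {a b x y M : ℝ} (ha : |a| ≤ 1) (hb : |b| ≤ 1) (hx : |x| ≤ M)
    (hy : |y| ≤ M) : |a * x - b * y| ≤ M + M := by
  refine (abs_sub _ _).trans (add_le_add ?_ ?_) <;> rw [abs_mul]
  · nlinarith [abs_nonneg x]
  · nlinarith [abs_nonneg y]

lemma abs_bv0Kernel_le {f : ℝ → ℝ} {b M t : ℝ} (hb : b ≤ 1)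
    (hM : ∀ x ∈ Icc (-b) b, |f x| ≤ M) (ht : t ∈ Icc (-b) b) (s : ℝ) :
    |bv0Kernel f t s| ≤ (Icc (-b) b).indicator (fun _ => M + M) s := by
  have hM0 : 0 ≤ M := (abs_nonneg _).trans (hM t ht)
  have habs : ∀ x ∈ Icc (-b) b, |x| ≤ 1 := fun x hx => (abs_le.2 hx).trans hb
  by_cases hs : s ∈ Icc (-b) b
  · rw [indicator_of_mem hs]
    by_cases h1 : s ∈ Ioc 0 t
    · have h2 : s ∉ Ico t 0 := fun h => h.2.not_gt h1.1
      simpa [bv0Kernel, h1, h2] using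
        abs_mul_sub_mul_le (habs t ht) (habs s hs) (hM s hs) (hM t ht)
    · by_cases h2 : s ∈ Ico t 0
      · simpa [bv0Kernel, h1, h2] using
          abs_mul_sub_mul_le (habs s hs) (habs t ht) (hM t ht) (hM s hs)
      · simp [bv0Kernel, h1, h2, hM0]
  · have h1 : s ∉ Ioc 0 t := fun h => hs ⟨by linarith [h.1, h.2, ht.2], h.2.trans ht.2⟩
    have h2 : s ∉ Ico t 0 := fun h => hs ⟨ht.1.trans h.1, by linarith [h.1, h.2, ht.1]⟩
    simp [bv0Kernel, h1, h2, hs]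

lemma continuousOn_integral_bv0Kernel {μ : Measure ℝ} {f : ℝ → ℝ}
    (hsupp : μ (Ioo (-1 : ℝ) 1)ᶜ = 0)
    (hμ : ∀ K : Set ℝ, IsCompact K → K ⊆ Ioo (-1 : ℝ) 1 → μ K ≠ ⊤)
    (hf : ContinuousOn f (Ioo (-1) 1)) :
    ContinuousOn (fun t => ∫ s, bv0Kernel f t s ∂μ) (Ioo (-1) 1) := by
  intro t₀ ht₀
  obtain ⟨b, htb, hb⟩ := exists_between (abs_lt.2 ht₀)
  have hsub : Icc (-b) b ⊆ Ioo (-1) 1 :=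
    fun x hx => ⟨by linarith [hx.1], hx.2.trans_lt hb⟩
  obtain ⟨M, hM⟩ := isCompact_Icc.exists_bound_of_continuousOn (hf.mono hsub)
  have hnear : ∀ᶠ t in 𝓝[Ioo (-1) 1] t₀, t ∈ Icc (-b) b :=
    mem_nhdsWithin_of_mem_nhds (Icc_mem_nhds (abs_lt.1 htb).1 (abs_lt.1 htb).2)
  refine continuousWithinAt_of_dominated
    (bound := (Icc (-b) b).indicator fun _ => M + M) ?_ ?_ ?_ ?_
  · filter_upwards [self_mem_nhdsWithin] with t ht using aestronglyMeasurable_bv0Kernel hf ht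
  · filter_upwards [hnear] with t ht using
      Eventually.of_forall (abs_bv0Kernel_le hb.le hM ht)
  · exact (integrable_indicator_iff measurableSet_Icc).2
      (integrableOn_of_continuousOn_Ioo hμ continuousOn_const (by linarith) hb)
  · have hae : ∀ᵐ s ∂μ, s ∈ Ioo (-1 : ℝ) 1 := hsupp
    filter_upwards [hae] with s hs using continuousOn_bv0Kernel hf hs t₀ ht₀

lemma integral_bv0Kernel_of_nonneg {μ : Measure ℝ} {f : ℝ → ℝ}
    (hμ : ∀ K : Set ℝ, IsCompact K → K ⊆ Ioo (-1 : ℝ) 1 → μ K ≠ ⊤)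
    (hf : ContinuousOn f (Ioo (-1) 1)) {t : ℝ} (h0 : 0 ≤ t) (h1 : t < 1) :
    ∫ s, bv0Kernel f t s ∂μ =
      t * (∫ s in Ioc 0 t, f s ∂μ) - (∫ s in Ioc 0 t, s ∂μ) * f t := by
  have hfi := (integrableOn_of_continuousOn_Ioo hμ hf neg_one_lt_zero h1).mono_set
    Ioc_subset_Icc_self
  have hidi := (integrableOn_of_continuousOn_Ioo hμ (continuousOn_id' _) neg_one_lt_zero
    h1).mono_set Ioc_subset_Icc_self
  simp only [bv0Kernel, Ico_eq_empty h0.not_gt, indicator_empty, add_zero]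
  rw [integral_indicator measurableSet_Ioc,
    integral_sub (hfi.const_mul t) (hidi.mul_const (f t)), integral_const_mul,
    integral_mul_const]

lemma integral_bv0Kernel_of_nonpos {μ : Measure ℝ} {f : ℝ → ℝ}
    (hμ : ∀ K : Set ℝ, IsCompact K → K ⊆ Ioo (-1 : ℝ) 1 → μ K ≠ ⊤)
    (hf : ContinuousOn f (Ioo (-1) 1)) {t : ℝ} (h0 : t ≤ 0) (h1 : -1 < t) :
    ∫ s, bv0Kernel f t s ∂μ =
      (∫ s in Ico t 0, s ∂μ) * f t - t * ∫ s in Ico t 0, f s ∂μ := by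
  have hfi := (integrableOn_of_continuousOn_Ioo hμ hf h1 zero_lt_one).mono_set
    Ico_subset_Icc_self
  have hidi := (integrableOn_of_continuousOn_Ioo hμ (continuousOn_id' _) h1
    zero_lt_one).mono_set Ico_subset_Icc_self
  simp only [bv0Kernel, Ioc_eq_empty h0.not_gt, indicator_empty, zero_add]
  rw [integral_indicator measurableSet_Ico,
    integral_sub (hidi.mul_const (f t)) (hfi.const_mul t), integral_const_mul,
    integral_mul_const]

lemma NormBV0.T_eq_integral_bv0Kernel (P : NormBV0) {f : ℝ → ℝ}
    (hf : ContinuousOn f (Ioo (-1) 1)) {t : ℝ} (ht : t ∈ Ioo (-1 : ℝ) 1) :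
    P.T f t =
      P.R 0 * f t + ((∫ s, bv0Kernel f t s ∂P.νp) - ∫ s, bv0Kernel f t s ∂P.νm) := by
  unfold NormBV0.T NormBV0.integ
  split_ifs with h
  · rw [integral_bv0Kernel_of_nonneg P.locfin_p hf h.le ht.2,
      integral_bv0Kernel_of_nonneg P.locfin_m hf h.le ht.2, P.fund_pos t ⟨h.le, ht.2⟩]
    ring
  · have h' := not_lt.1 h
    rw [integral_bv0Kernel_of_nonpos P.locfin_p hf h' ht.1,
      integral_bv0Kernel_of_nonpos P.locfin_m hf h' ht.1, P.fund_neg t ⟨ht.1, h'⟩]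
    ring

/-- For a normalized BV₀ pair `(R,ν)` and a continuous function `f` on
`(-1,1)`, the transform `T_{R,ν} f` is continuous on `(-1,1)`. -/
theorem bv0_transform_continuousOn (P : NormBV0) (f : ℝ → ℝ)
    (hf : ContinuousOn f (Set.Ioo (-1 : ℝ) 1)) :
    ContinuousOn (P.T f) (Set.Ioo (-1 : ℝ) 1) :=
  ((continuousOn_const.mul hf).add
    ((continuousOn_integral_bv0Kernel P.supp_p P.locfin_p hf).sub
      (continuousOn_integral_bv0Kernel P.supp_m P.locfin_m hf))).congr
    fun _ ht => P.T_eq_integral_bv0Kernel hf ht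
end

section
/- Let (R, ν_R) and (Q, ν_Q) be normalized BV₀ pairs on (−1,1), and let ν_{RQ} be the signed measure on (−1,1) with dν_{RQ}(t) = Q(t⁻) dν_R(t) + R(t⁺) dν_Q(t). Then (R·Q, ν_{RQ}) is a normalized BV₀ pair, and T_{RQ, ν_{RQ}} f = T_{R,ν_R}(T_{Q,ν_Q} f) = T_{Q,ν_Q}(T_{R,ν_R} f) for every continuous f : (−1,1) → ℝ. In particular, if inf_{t∈K} |R(t)| > 0 for every compact K ⊆ (−1,1), then T_{R,ν_R} is a bijection of the space of continuous functions on (−1,1) onto itself, with inverse T_{1/R, ν_{1/R}}, where dν_{1/R}(t) = −(R(t⁻)·R(t⁺))⁻¹ dν_R(t). -/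
open MeasureTheory Set Filter Function Topology

/-- The transform associated to the product pair `(R·Q, ν_{RQ})`, where
`dν_{RQ}(t) = Q(t⁻) dν_R(t) + R(t⁺) dν_Q(t)`. -/
noncomputable def NormBV0.Tprod (P Q : NormBV0) (f : ℝ → ℝ) (t : ℝ) : ℝ :=
  if 0 < t then
    P.R t * Q.R t * f t +
      t * (P.integ (Set.Ioc 0 t) (fun s => Function.leftLim Q.R s * f s) +
            Q.integ (Set.Ioc 0 t) (fun s => Function.rightLim P.R s * f s))
  else
    P.R t * Q.R t * f t -
      t * (P.integ (Set.Ico t 0) (fun s => Function.leftLim Q.R s * f s) +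
            Q.integ (Set.Ico t 0) (fun s => Function.rightLim P.R s * f s))

/-- The transform associated to the pair `(1/R, ν_{1/R})`, where
`dν_{1/R}(t) = -(R(t⁻)·R(t⁺))⁻¹ dν_R(t)`. -/
noncomputable def NormBV0.Tinv (P : NormBV0) (f : ℝ → ℝ) (t : ℝ) : ℝ :=
  if 0 < t then
    (P.R t)⁻¹ * f t +
      t * P.integ (Set.Ioc 0 t)
        (fun s => -((Function.leftLim P.R s * Function.rightLim P.R s)⁻¹) * f s)
  else
    (P.R t)⁻¹ * f t -
      t * P.integ (Set.Ico t 0)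
        (fun s => -((Function.leftLim P.R s * Function.rightLim P.R s)⁻¹) * f s)

/-- The half-open interval with endpoints `0` (excluded) and `t` (included). -/
def ray (t : ℝ) : Set ℝ := {x | (0 < x ∧ x ≤ t) ∨ (t ≤ x ∧ x < 0)}

theorem ray_of_pos {t : ℝ} (ht : 0 < t) : ray t = Ioc 0 t := by
  ext x
  simp only [ray, mem_ofPred_eq, mem_Ioc]
  grind

theorem ray_of_nonpos {t : ℝ} (ht : t ≤ 0) : ray t = Ico t 0 := by
  ext x
  simp only [ray, mem_ofPred_eq, mem_Ico]
  grind

theorem measurableSet_ray (t : ℝ) : MeasurableSet (ray t) := by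
  rcases lt_or_ge 0 t with ht | ht
  · rw [ray_of_pos ht]
    exact measurableSet_Ioc
  · rw [ray_of_nonpos ht]
    exact measurableSet_Ico

theorem ray_subset_ray {s t : ℝ} (hs : s ∈ ray t) : ray s ⊆ ray t := by
  intro x hx
  simp only [ray, mem_ofPred_eq] at *
  grind

theorem notMem_ray_iff {t x y : ℝ} (hx : x ∈ ray t) (hy : y ∈ ray t) :
    x ∉ ray y ↔ y ∈ ray x \ {x} := by
  simp only [ray, mem_ofPred_eq, Set.mem_sdiff, mem_singleton_iff] at *
  grind

theorem mem_ray_self {t x : ℝ} (hx : x ∈ ray t) : x ∈ ray x := by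
  simp only [ray, mem_ofPred_eq] at *
  grind

theorem ray_subset_Icc (t : ℝ) : ray t ⊆ Icc (-|t|) |t| := by
  intro x hx
  simp only [ray, mem_ofPred_eq, mem_Icc] at *
  grind

theorem ray_subset_Ioo {t : ℝ} (ht : t ∈ Ioo (-1 : ℝ) 1) : ray t ⊆ Ioo (-1 : ℝ) 1 := by
  intro x hx
  simp only [ray, mem_ofPred_eq, mem_Ioo] at *
  grind

theorem measurableSet_mem_ray : MeasurableSet {p : ℝ × ℝ | p.1 ∈ ray p.2} := by
  have : {p : ℝ × ℝ | p.1 ∈ ray p.2} =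
      ({p | 0 < p.1} ∩ {p | p.1 ≤ p.2}) ∪ ({p | p.2 ≤ p.1} ∩ {p | p.1 < 0}) := by
    ext p
    simp [ray]
  rw [this]
  exact ((measurableSet_lt measurable_const measurable_fst).inter
    (measurableSet_le measurable_fst measurable_snd)).union
    ((measurableSet_le measurable_snd measurable_fst).inter
    (measurableSet_lt measurable_fst measurable_const))

/-- The primitive of `g` with respect to `μ`, vanishing at `0`. -/
noncomputable def prim (μ : Measure ℝ) (g : ℝ → ℝ) (t : ℝ) : ℝ := ∫ s in ray t, g s ∂μ

/-- The limit from the side of `0` of the primitive of `g` with respect to `μ`. -/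
noncomputable def primIn (μ : Measure ℝ) (g : ℝ → ℝ) (t : ℝ) : ℝ := ∫ s in ray t \ {t}, g s ∂μ

theorem prim_eq_primIn_add {μ : Measure ℝ} {g : ℝ → ℝ} {t s : ℝ} (hs : s ∈ ray t)
    (hg : IntegrableOn g (ray t) μ) : prim μ g s = primIn μ g s + g s * μ.real {s} := by
  have h1 : ray s = (ray s \ {s}) ∪ {s} := by
    rw [sdiff_union_of_subset]
    simpa using mem_ray_self hs
  have hg' := hg.mono_set (ray_subset_ray hs)
  rw [prim, h1, setIntegral_union disjoint_sdiff_left (measurableSet_singleton s)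
    (hg'.mono_set sdiff_subset) (hg'.mono_set (by simpa using mem_ray_self hs)), primIn]
  simp [mul_comm, measureReal_def]

/-- Integration by parts for a product of two primitives. -/
theorem prim_mul_prim {μ₁ μ₂ : Measure ℝ} {a b : ℝ → ℝ} {t : ℝ}
    (h₁ : μ₁ (ray t) ≠ ⊤) (h₂ : μ₂ (ray t) ≠ ⊤)
    (ha : IntegrableOn a (ray t) μ₁) (hb : IntegrableOn b (ray t) μ₂) :
    IntegrableOn (fun s => b s * prim μ₁ a s) (ray t) μ₂ ∧
    IntegrableOn (fun s => a s * primIn μ₂ b s) (ray t) μ₁ ∧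
    prim μ₁ a t * prim μ₂ b t =
      ∫ s in ray t, b s * prim μ₁ a s ∂μ₂ + ∫ s in ray t, a s * primIn μ₂ b s ∂μ₁ := by
  have : IsFiniteMeasure (μ₁.restrict (ray t)) := isFiniteMeasure_restrict.2 h₁
  have : IsFiniteMeasure (μ₂.restrict (ray t)) := isFiniteMeasure_restrict.2 h₂
  set m₁ := μ₁.restrict (ray t) with hm₁
  set m₂ := μ₂.restrict (ray t) with hm₂
  set D := {p : ℝ × ℝ | p.1 ∈ ray p.2}
  set F : ℝ × ℝ → ℝ := fun p => a p.1 * b p.2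
  have hF : Integrable F (m₁.prod m₂) := ha.mul_prod hb
  have hD : MeasurableSet D := measurableSet_mem_ray
  have hmem : ∀ x y, (x, y) ∈ D ↔ x ∈ ray y := fun _ _ => by simp [D]
  have hFD := hF.indicator hD
  have hFD' := hF.indicator hD.compl
  have e₁ : ∀ y ∈ ray t, ∫ x, D.indicator F (x, y) ∂m₁ = b y * prim μ₁ a y := by
    intro y hy
    have : ∀ x, D.indicator F (x, y) = (ray y).indicator (fun x => b y * a x) x := by
      intro x
      by_cases h : x ∈ ray y <;> simp [indicator, F, hmem, h, mul_comm]
    simp_rw [this]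
    rw [integral_indicator (measurableSet_ray y), hm₁,
      Measure.restrict_restrict (measurableSet_ray y),
      inter_eq_self_of_subset_left (ray_subset_ray hy), integral_const_mul, prim]
  have e₂ : ∀ x ∈ ray t, ∫ y, Dᶜ.indicator F (x, y) ∂m₂ = a x * primIn μ₂ b x := by
    intro x hx
    have hmeas : MeasurableSet (ray x \ {x}) :=
      (measurableSet_ray x).diff (measurableSet_singleton x)
    have : ∀ y ∈ ray t,
        Dᶜ.indicator F (x, y) = (ray x \ {x}).indicator (fun y => a x * b y) y := by
      intro y hy
      by_cases h : y ∈ ray x \ {x}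
      · rw [indicator_of_mem h, indicator_of_mem]
        rwa [mem_compl_iff, hmem, notMem_ray_iff hx hy]
      · rw [indicator_of_notMem h, indicator_of_notMem]
        rwa [mem_compl_iff, hmem, notMem_ray_iff hx hy]
    rw [hm₂, setIntegral_congr_fun (measurableSet_ray t) this,
      integral_indicator hmeas, Measure.restrict_restrict hmeas,
      inter_eq_self_of_subset_left (sdiff_subset.trans (ray_subset_ray hx)), integral_const_mul,
      primIn]
  refine ⟨?_, ?_, ?_⟩
  · exact hFD.integral_prod_right.congr
      ((ae_restrict_iff' (measurableSet_ray t)).2 (ae_of_all _ e₁))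
  · exact hFD'.integral_prod_left.congr
      ((ae_restrict_iff' (measurableSet_ray t)).2 (ae_of_all _ e₂))
  · have h : ∫ p, F p ∂(m₁.prod m₂) =
        ∫ p, D.indicator F p ∂(m₁.prod m₂) + ∫ p, Dᶜ.indicator F p ∂(m₁.prod m₂) := by
      rw [← integral_add hFD hFD']
      simp only [indicator_self_add_compl_apply]
    rw [integral_prod_mul, integral_prod_symm _ hFD, integral_prod _ hFD'] at h
    rw [← setIntegral_congr_fun (measurableSet_ray t) e₁,
      ← setIntegral_congr_fun (measurableSet_ray t) e₂]
    exact h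

/-- The atomic correction term in integration by parts is symmetric. -/
theorem setIntegral_mul_atom_comm {μ₁ μ₂ : Measure ℝ} {a b : ℝ → ℝ} {t : ℝ}
    (h₁ : μ₁ (ray t) ≠ ⊤) (h₂ : μ₂ (ray t) ≠ ⊤)
    (ha : IntegrableOn a (ray t) μ₁) (hb : IntegrableOn b (ray t) μ₂) :
    ∫ s in ray t, a s * (prim μ₂ b s - primIn μ₂ b s) ∂μ₁ =
      ∫ s in ray t, b s * (prim μ₁ a s - primIn μ₁ a s) ∂μ₂ := by
  obtain ⟨i₁, i₂, e⟩ := prim_mul_prim h₁ h₂ ha hb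
  obtain ⟨j₁, j₂, e'⟩ := prim_mul_prim h₂ h₁ hb ha
  simp_rw [mul_sub]
  rw [integral_sub j₁ i₂, integral_sub i₁ j₂]
  linarith

/-- Integration by parts for a product of two functions of bounded variation. -/
theorem sub_prim_mul_sub_prim {μ₁ μ₂ : Measure ℝ} {a b : ℝ → ℝ} {t : ℝ}
    (h₁ : μ₁ (ray t) ≠ ⊤) (h₂ : μ₂ (ray t) ≠ ⊤)
    (ha : IntegrableOn a (ray t) μ₁) (hb : IntegrableOn b (ray t) μ₂) (c₁ c₂ : ℝ) :
    IntegrableOn (fun s => b s * (c₁ - prim μ₁ a s)) (ray t) μ₂ ∧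
    IntegrableOn (fun s => a s * (c₂ - primIn μ₂ b s)) (ray t) μ₁ ∧
    (c₁ - prim μ₁ a t) * (c₂ - prim μ₂ b t) = c₁ * c₂ -
      (∫ s in ray t, a s * (c₂ - primIn μ₂ b s) ∂μ₁ +
        ∫ s in ray t, b s * (c₁ - prim μ₁ a s) ∂μ₂) := by
  obtain ⟨i₁, i₂, e⟩ := prim_mul_prim h₁ h₂ ha hb
  simp_rw [mul_sub]
  have ha' := ha.mul_const c₂
  have hb' := hb.mul_const c₁
  refine ⟨hb'.sub i₁, ha'.sub i₂, ?_⟩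
  rw [integral_sub ha' i₂, integral_sub hb' i₁, integral_mul_const, integral_mul_const]
  simp only [prim] at e ⊢
  linarith

theorem prim_nonneg {μ : Measure ℝ} {g : ℝ → ℝ} (hg : ∀ s, 0 ≤ g s) (t : ℝ) :
    0 ≤ prim μ g t :=
  integral_nonneg hg

theorem primIn_nonneg {μ : Measure ℝ} {g : ℝ → ℝ} (hg : ∀ s, 0 ≤ g s) (t : ℝ) :
    0 ≤ primIn μ g t :=
  integral_nonneg hg

theorem primIn_le_prim {μ : Measure ℝ} {g : ℝ → ℝ} (hg : ∀ s, 0 ≤ g s) {t : ℝ}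
    (hi : IntegrableOn g (ray t) μ) : primIn μ g t ≤ prim μ g t :=
  setIntegral_mono_set hi (ae_of_all _ hg) sdiff_subset.eventuallyLE

/-- A Grönwall lemma: a density dominated by its own strict primitive vanishes. -/
theorem prim_eq_zero_of_abs_le {μ : Measure ℝ} {g w : ℝ → ℝ} (hg0 : ∀ s, 0 ≤ g s) {t : ℝ}
    (hμ : μ (ray t) ≠ ⊤) (hg : IntegrableOn g (ray t) μ) (hw : IntegrableOn w (ray t) μ)
    (hle : ∀ s ∈ ray t, |w s| ≤ g s * |primIn μ w s|) : prim μ w t = 0 := by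
  set v : ℝ → ℝ := fun s => |w s|
  have hv0 : ∀ s, 0 ≤ v s := fun s => abs_nonneg _
  have hv : IntegrableOn v (ray t) μ := hw.abs
  have hvle : ∀ s ∈ ray t, v s ≤ g s * primIn μ v s := fun s hs =>
    (hle s hs).trans (mul_le_mul_of_nonneg_left abs_integral_le_integral_abs (hg0 s))
  have key : ∀ k : ℕ, ∀ t', ray t' ⊆ ray t → prim μ g t' < k → prim μ v t' = 0 := by
    intro k
    induction k with
    | zero =>
      intro t' _ h
      exact absurd h (by simpa using prim_nonneg hg0 t')
    | succ k ih =>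
      intro t' ht' hk
      have hgt := hg.mono_set ht'
      have hvt := hv.mono_set ht'
      have hμt : μ (ray t') ≠ ⊤ := ((measure_mono ht').trans_lt hμ.lt_top).ne
      obtain ⟨i₁, i₂, e⟩ := prim_mul_prim hμt hμt hgt hvt
      have hVle : prim μ v t' ≤ ∫ s in ray t', g s * primIn μ v s ∂μ :=
        setIntegral_mono_on hvt i₂ (measurableSet_ray t') fun s hs => hvle s (ht' hs)
      have hi : IntegrableOn (fun s => v s * (1 - prim μ g t') + v s * prim μ g s) (ray t') μ :=
        (hvt.mul_const _).add i₁
      have hint : ∫ s in ray t', (v s * (1 - prim μ g t') + v s * prim μ g s) ∂μ ≤ 0 := by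
        rw [integral_add (hvt.mul_const _) i₁, integral_mul_const]
        simp only [prim] at e hVle ⊢
        linarith
      have hcase : ∀ s ∈ ray t', v s = 0 ∨ 0 < 1 - prim μ g t' + prim μ g s := by
        intro s hs
        rcases lt_or_ge (prim μ g s) k with h | h
        · left
          have hs' := (ray_subset_ray hs).trans ht'
          have h0 := ih s hs' h
          have h1 := primIn_le_prim hv0 (hv.mono_set hs')
          have h2 := primIn_nonneg (μ := μ) hv0 s
          have h3 : primIn μ v s = 0 := le_antisymm (h1.trans h0.le) h2
          have h4 := hvle s (ht' hs)
          rw [h3, mul_zero] at h4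
          exact le_antisymm h4 (hv0 s)
        · right
          push_cast at hk
          linarith
      have hnn : ∀ s ∈ ray t', 0 ≤ v s * (1 - prim μ g t') + v s * prim μ g s := by
        intro s hs
        rw [← mul_add]
        rcases hcase s hs with h | h
        · simp [h]
        · exact mul_nonneg (hv0 s) h.le
      have hae := (setIntegral_eq_zero_iff_of_nonneg_ae
        ((ae_restrict_iff' (measurableSet_ray t')).2 (ae_of_all _ hnn)) hi).1
        (le_antisymm hint (setIntegral_nonneg (measurableSet_ray t') hnn))
      have hv' : v =ᵐ[μ.restrict (ray t')] 0 := by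
        filter_upwards [hae, ae_restrict_mem (measurableSet_ray t')] with s hs hst
        rcases hcase s hst with h | h
        · exact h
        · simp only [← mul_add, Pi.zero_apply, mul_eq_zero] at hs
          exact hs.resolve_right h.ne'
      exact integral_eq_zero_of_ae hv'
  obtain ⟨k, hk⟩ := exists_nat_gt (prim μ g t)
  have h := key k t subset_rfl hk
  have : |prim μ w t| ≤ prim μ v t := abs_integral_le_integral_abs
  exact abs_nonpos_iff.1 (this.trans h.le)

theorem integrableOn_ray_mul {f g : ℝ → ℝ} {μ : Measure ℝ} {t : ℝ} (ht : t ∈ Ioo (-1 : ℝ) 1)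
    (hf : ContinuousOn f (Ioo (-1 : ℝ) 1)) (hg : IntegrableOn g (ray t) μ) :
    IntegrableOn (fun s => f s * g s) (ray t) μ := by
  have hsub : Icc (-|t|) |t| ⊆ Ioo (-1 : ℝ) 1 := by
    intro x hx
    simp only [mem_Icc, mem_Ioo] at *
    grind
  obtain ⟨M, hM⟩ := isCompact_Icc.exists_bound_of_continuousOn (hf.mono hsub)
  refine Integrable.bdd_mul (c := M) hg ?_ ?_
  · exact ((hf.mono hsub).aestronglyMeasurable measurableSet_Icc).mono_measure
      (Measure.restrict_mono (ray_subset_Icc t) le_rfl)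
  · exact (ae_restrict_iff' (measurableSet_ray t)).2
      (ae_of_all _ fun s hs => hM s (ray_subset_Icc t hs))

theorem prim_congr {μ : Measure ℝ} {f g : ℝ → ℝ} {t : ℝ} (h : ∀ s ∈ ray t, f s = g s) :
    prim μ f t = prim μ g t :=
  setIntegral_congr_fun (measurableSet_ray t) h

/-- A function `R` on `(-1,1)` of bounded variation away from the endpoints, with
`dR = -s h dμ` for a density `h` with respect to a positive measure `μ`. -/
structure IsBVPair (R h : ℝ → ℝ) (μ : Measure ℝ) : Prop where
  measure_ne_top : ∀ t ∈ Ioo (-1 : ℝ) 1, μ (ray t) ≠ ⊤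
  integrableOn : ∀ t ∈ Ioo (-1 : ℝ) 1, IntegrableOn h (ray t) μ
  eq_sub_prim : ∀ t ∈ Ioo (-1 : ℝ) 1, R t = R 0 - prim μ (fun s => |s| * h s) t

/-- The limit of `R` at `t` from the side of `0`. -/
noncomputable def innerLim (R h : ℝ → ℝ) (μ : Measure ℝ) (t : ℝ) : ℝ :=
  R 0 - primIn μ (fun s => |s| * h s) t

/-- The transform attached to `R` and the signed measure `h dμ`. -/
noncomputable def bvT (R h : ℝ → ℝ) (μ : Measure ℝ) (f : ℝ → ℝ) (t : ℝ) : ℝ :=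
  R t * f t + |t| * prim μ (fun s => f s * h s) t

namespace IsBVPair

variable {R h R₁ h₁ R₂ h₂ f : ℝ → ℝ} {μ μ₁ μ₂ : Measure ℝ} {t : ℝ}

theorem integrableOn_abs_mul (p : IsBVPair R h μ) (ht : t ∈ Ioo (-1 : ℝ) 1) :
    IntegrableOn (fun s => |s| * h s) (ray t) μ :=
  integrableOn_ray_mul ht continuous_abs.continuousOn (p.integrableOn t ht)

theorem innerLim_eq (p : IsBVPair R h μ) (ht : t ∈ Ioo (-1 : ℝ) 1) {s : ℝ} (hs : s ∈ ray t) :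
    innerLim R h μ s = R s + |s| * h s * μ.real {s} := by
  rw [p.eq_sub_prim s (ray_subset_Ioo ht hs), innerLim,
    prim_eq_primIn_add hs (p.integrableOn_abs_mul ht)]
  ring

theorem integrableOn_mul {ρ : Measure ℝ} {g : ℝ → ℝ} (p : IsBVPair R h μ)
    (ht : t ∈ Ioo (-1 : ℝ) 1) (hρ : ρ (ray t) ≠ ⊤) (hg : IntegrableOn g (ray t) ρ) :
    IntegrableOn (fun s => g s * R s) (ray t) ρ := by
  refine (integrableOn_congr_fun (fun s hs => ?_) (measurableSet_ray t)).1
    (sub_prim_mul_sub_prim (p.measure_ne_top t ht) hρ (p.integrableOn_abs_mul ht) hg (R 0) 0).1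
  rw [p.eq_sub_prim s (ray_subset_Ioo ht hs)]

theorem integrableOn_mul_innerLim {ρ : Measure ℝ} {g : ℝ → ℝ} (p : IsBVPair R h μ)
    (ht : t ∈ Ioo (-1 : ℝ) 1) (hρ : ρ (ray t) ≠ ⊤) (hg : IntegrableOn g (ray t) ρ) :
    IntegrableOn (fun s => g s * innerLim R h μ s) (ray t) ρ :=
  (sub_prim_mul_sub_prim hρ (p.measure_ne_top t ht) hg (p.integrableOn_abs_mul ht) 0 (R 0)).2.1

/-- The product rule. -/
theorem mul_eq (p₁ : IsBVPair R₁ h₁ μ₁) (p₂ : IsBVPair R₂ h₂ μ₂) (ht : t ∈ Ioo (-1 : ℝ) 1) :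
    R₁ t * R₂ t = R₁ 0 * R₂ 0 -
      (∫ s in ray t, |s| * h₁ s * innerLim R₂ h₂ μ₂ s ∂μ₁ +
        ∫ s in ray t, |s| * h₂ s * R₁ s ∂μ₂) := by
  have e := (sub_prim_mul_sub_prim (p₁.measure_ne_top t ht) (p₂.measure_ne_top t ht)
    (p₁.integrableOn_abs_mul ht) (p₂.integrableOn_abs_mul ht) (R₁ 0) (R₂ 0)).2.2
  rw [← p₁.eq_sub_prim t ht, ← p₂.eq_sub_prim t ht] at e
  rw [e]
  congr 2
  refine setIntegral_congr_fun (measurableSet_ray t) fun s hs => ?_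
  rw [p₁.eq_sub_prim s (ray_subset_Ioo ht hs)]

/-- The composition of two transforms. -/
theorem bvT_comp (p₁ : IsBVPair R₁ h₁ μ₁) (p₂ : IsBVPair R₂ h₂ μ₂)
    (hf : ContinuousOn f (Ioo (-1 : ℝ) 1)) (ht : t ∈ Ioo (-1 : ℝ) 1) :
    bvT R₁ h₁ μ₁ (bvT R₂ h₂ μ₂ f) t = R₁ t * R₂ t * f t +
      |t| * (∫ s in ray t, f s * h₁ s * innerLim R₂ h₂ μ₂ s ∂μ₁ +
        ∫ s in ray t, f s * h₂ s * R₁ s ∂μ₂) := by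
  have m₁ := p₁.measure_ne_top t ht
  have m₂ := p₂.measure_ne_top t ht
  have hfh := integrableOn_ray_mul ht hf (p₂.integrableOn t ht)
  have hfh₁ := integrableOn_ray_mul ht hf (p₁.integrableOn t ht)
  obtain ⟨-, i, e⟩ := sub_prim_mul_sub_prim m₁ m₂ (p₁.integrableOn_abs_mul ht) hfh (R₁ 0) 0
  rw [← p₁.eq_sub_prim t ht] at e
  have e' : ∫ s in ray t, f s * h₂ s * R₁ s ∂μ₂ =
      ∫ s in ray t, f s * h₂ s * (R₁ 0 - prim μ₁ (fun s => |s| * h₁ s) s) ∂μ₂ := by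
    refine setIntegral_congr_fun (measurableSet_ray t) fun s hs => ?_
    rw [p₁.eq_sub_prim s (ray_subset_Ioo ht hs)]
  rw [← e'] at e
  have e'' : prim μ₁ (fun s => bvT R₂ h₂ μ₂ f s * h₁ s) t =
      ∫ s in ray t, f s * h₁ s * innerLim R₂ h₂ μ₂ s ∂μ₁ -
      ∫ s in ray t, |s| * h₁ s * (0 - primIn μ₂ (fun s => f s * h₂ s) s) ∂μ₁ := by
    rw [← integral_sub (p₂.integrableOn_mul_innerLim ht m₁ hfh₁) i]
    refine prim_congr fun s hs => ?_
    simp only [bvT, prim_eq_primIn_add hs hfh, p₂.innerLim_eq ht hs]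
    ring
  rw [bvT, e'', bvT]
  linear_combination (-|t|) * e

theorem bvT_comm (p₁ : IsBVPair R₁ h₁ μ₁) (p₂ : IsBVPair R₂ h₂ μ₂)
    (hf : ContinuousOn f (Ioo (-1 : ℝ) 1)) (ht : t ∈ Ioo (-1 : ℝ) 1) :
    bvT R₁ h₁ μ₁ (bvT R₂ h₂ μ₂ f) t = bvT R₂ h₂ μ₂ (bvT R₁ h₁ μ₁ f) t := by
  have m₁ := p₁.measure_ne_top t ht
  have m₂ := p₂.measure_ne_top t ht
  have g₁ := p₁.integrableOn t ht
  have g₂ := p₂.integrableOn t ht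
  have a₁ := integrableOn_ray_mul ht hf g₁
  have a₂ := integrableOn_ray_mul ht hf g₂
  have b₁ : IntegrableOn (fun s => f s * |s| * h₁ s) (ray t) μ₁ :=
    integrableOn_ray_mul ht (hf.mul continuous_abs.continuousOn) g₁
  have e := setIntegral_mul_atom_comm m₁ m₂ b₁ g₂
  have e₁ : ∫ s in ray t, f s * h₁ s * innerLim R₂ h₂ μ₂ s ∂μ₁ -
      ∫ s in ray t, f s * h₁ s * R₂ s ∂μ₁ =
      ∫ s in ray t, f s * |s| * h₁ s * (prim μ₂ h₂ s - primIn μ₂ h₂ s) ∂μ₁ := by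
    rw [← integral_sub (p₂.integrableOn_mul_innerLim ht m₁ a₁) (p₂.integrableOn_mul ht m₁ a₁)]
    refine setIntegral_congr_fun (measurableSet_ray t) fun s hs => ?_
    simp only [p₂.innerLim_eq ht hs, prim_eq_primIn_add hs g₂]
    ring
  have e₂ : ∫ s in ray t, f s * h₂ s * innerLim R₁ h₁ μ₁ s ∂μ₂ -
      ∫ s in ray t, f s * h₂ s * R₁ s ∂μ₂ =
      ∫ s in ray t, h₂ s * (prim μ₁ (fun s => f s * |s| * h₁ s) s -
        primIn μ₁ (fun s => f s * |s| * h₁ s) s) ∂μ₂ := by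
    rw [← integral_sub (p₁.integrableOn_mul_innerLim ht m₂ a₂) (p₁.integrableOn_mul ht m₂ a₂)]
    refine setIntegral_congr_fun (measurableSet_ray t) fun s hs => ?_
    simp only [p₁.innerLim_eq ht hs, prim_eq_primIn_add hs b₁]
    ring
  rw [p₁.bvT_comp p₂ hf ht, p₂.bvT_comp p₁ hf ht]
  linear_combination |t| * e₁ - |t| * e₂ + |t| * e

theorem continuousOn_bvT (p : IsBVPair R h μ) (hf : ContinuousOn f (Ioo (-1 : ℝ) 1)) :
    ContinuousOn (bvT R h μ f) (Ioo (-1 : ℝ) 1) := by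
  have hform : ∀ t ∈ Ioo (-1 : ℝ) 1, bvT R h μ f t =
      R 0 * f t + ∫ s in ray t, (|t| * f s - |s| * f t) * h s ∂μ := by
    intro t ht
    have e : ∫ s in ray t, (|t| * f s - |s| * f t) * h s ∂μ =
        ∫ s in ray t, (|t| * (f s * h s) - f t * (|s| * h s)) ∂μ := by
      congr 1
      ext s
      ring
    rw [e, integral_sub ((integrableOn_ray_mul ht hf (p.integrableOn t ht)).const_mul _)
      ((p.integrableOn_abs_mul ht).const_mul _), integral_const_mul, integral_const_mul, bvT,
      p.eq_sub_prim t ht, prim, prim]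
    ring
  refine ContinuousOn.congr (fun t₀ ht₀ => ?_) hform
  refine ((continuousWithinAt_const).mul (hf t₀ ht₀)).add (ContinuousAt.continuousWithinAt ?_)
  obtain ⟨r, hr₀, hr₁⟩ : ∃ r, |t₀| < r ∧ r < 1 := exists_between (abs_lt.2 ht₀)
  have hr : 0 < r := (abs_nonneg _).trans_lt hr₀
  have hsub : Icc (-r) r ⊆ Ioo (-1 : ℝ) 1 := Icc_subset_Ioo (by linarith) hr₁
  obtain ⟨M, hM⟩ := isCompact_Icc.exists_bound_of_continuousOn (hf.mono hsub)
  simp only [Real.norm_eq_abs] at hM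
  set B := ray r ∪ ray (-r)
  have hB : MeasurableSet B := (measurableSet_ray r).union (measurableSet_ray (-r))
  have hBmem : ∀ x ∈ B, x ∈ Icc (-r) r ∧ x ≠ 0 := by
    intro x hx
    simp only [B, ray, mem_union, mem_ofPred_eq, mem_Icc] at *
    grind
  have hBI : B ⊆ Icc (-r) r := fun x hx => (hBmem x hx).1
  have hrayB : ∀ t ∈ Ioo (-r) r, ray t ⊆ B := by
    intro t ht x hx
    simp only [B, ray, mem_union, mem_ofPred_eq, mem_Ioo] at *
    grind
  have hhB : IntegrableOn h B μ :=
    (p.integrableOn r (hsub (right_mem_Icc.2 (by linarith)))).union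
      (p.integrableOn (-r) (hsub (left_mem_Icc.2 (by linarith))))
  have hnhds : ∀ᶠ t in 𝓝 t₀, t ∈ Ioo (-r) r := Ioo_mem_nhds (abs_lt.1 hr₀).1 (abs_lt.1 hr₀).2
  have hfB : AEStronglyMeasurable f (μ.restrict B) :=
    ((hf.mono hsub).aestronglyMeasurable measurableSet_Icc).mono_measure
      (Measure.restrict_mono hBI le_rfl)
  have hEq : (fun t => ∫ s in ray t, (|t| * f s - |s| * f t) * h s ∂μ) =ᶠ[𝓝 t₀]
      fun t => ∫ s in B, (ray t).indicator (fun s => (|t| * f s - |s| * f t) * h s) s ∂μ := by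
    filter_upwards [hnhds] with t ht
    rw [setIntegral_indicator (measurableSet_ray t), inter_eq_self_of_subset_right (hrayB t ht)]
  refine ContinuousAt.congr ?_ hEq.symm
  refine continuousAt_of_dominated (bound := fun s => 2 * M * |h s|) ?_ ?_ (hhB.abs.const_mul _) ?_
  · refine Eventually.of_forall fun t => AEStronglyMeasurable.indicator ?_ (measurableSet_ray t)
    exact ((hfB.const_mul _).sub
      (continuous_abs.aestronglyMeasurable.mul_const _)).mul hhB.aestronglyMeasurable
  · filter_upwards [hnhds] with t ht
    filter_upwards [ae_restrict_mem hB] with s hs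
    have hM0 : 0 ≤ M := (abs_nonneg _).trans (hM s (hBI hs))
    refine (norm_indicator_le_norm_self _ _).trans ?_
    rw [norm_mul, Real.norm_eq_abs, Real.norm_eq_abs]
    refine mul_le_mul_of_nonneg_right ?_ (abs_nonneg _)
    have h1 : |t| ≤ 1 := (abs_lt.2 ht).le.trans hr₁.le
    have h2 : |s| ≤ 1 := (abs_le.2 (hBI hs)).trans hr₁.le
    calc |(|t| * f s - |s| * f t)| ≤ |(|t| * f s)| + |(|s| * f t)| := abs_sub _ _
      _ = |t| * |f s| + |s| * |f t| := by simp [abs_mul]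
      _ ≤ 1 * M + 1 * M := by
        gcongr
        · exact hM s (hBI hs)
        · exact hM t (Ioo_subset_Icc_self ht)
      _ = 2 * M := by ring
  · filter_upwards [ae_restrict_mem hB] with s hs
    have hft : ContinuousAt f t₀ := hf.continuousAt (Ioo_mem_nhds ht₀.1 ht₀.2)
    have hK : ContinuousAt (fun t => (|t| * f s - |s| * f t) * h s) t₀ := by fun_prop
    by_cases hst : s = t₀
    · subst hst
      have hzero : (|s| * f s - |s| * f s) * h s = 0 := by ring
      rw [ContinuousAt, hzero] at hK
      have hval : (ray s).indicator (fun x => (|s| * f x - |x| * f s) * h x) s = 0 := by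
        by_cases hx : s ∈ ray s <;> simp [indicator, hx]
      rw [ContinuousAt, hval]
      exact squeeze_zero_norm (fun t => norm_indicator_le_norm_self _ _)
        (by simpa using hK.norm)
    · have hs0 := (hBmem s hs).2
      have hev : ∀ᶠ t in 𝓝 t₀, (s ∈ ray t ↔ s ∈ ray t₀) := by
        rcases lt_or_gt_of_ne hst with hlt | hlt
        · filter_upwards [lt_mem_nhds hlt] with t ht
          simp only [ray, mem_ofPred_eq]
          grind
        · filter_upwards [gt_mem_nhds hlt] with t ht
          simp only [ray, mem_ofPred_eq]
          grind
      by_cases hx : s ∈ ray t₀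
      · refine hK.congr ?_
        filter_upwards [hev] with t ht
        rw [indicator_of_mem (ht.2 hx)]
      · refine continuousAt_const.congr (f := fun _ => (0 : ℝ)) ?_
        filter_upwards [hev] with t ht
        rw [indicator_of_notMem (fun h => hx (ht.1 h))]

theorem tendsto_of_eventually_mem_iff (p : IsBVPair R h μ) {l : Filter ℝ}
    [l.IsCountablyGenerated] {E : Set ℝ} (hE : MeasurableSet E) {r : ℝ}
    (hr : r ∈ Ioo (-1 : ℝ) 1) (hEr : E ⊆ ray r)
    (hl : ∀ᶠ u in l, u ∈ ray r) (hmem : ∀ x, ∀ᶠ u in l, (x ∈ ray u ↔ x ∈ E)) :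
    Tendsto R l (𝓝 (R 0 - ∫ s in E, |s| * h s ∂μ)) := by
  have hi := p.integrableOn_abs_mul hr
  have hEq : R =ᶠ[l] fun u => R 0 - ∫ s in ray r, (ray u).indicator (fun s => |s| * h s) s ∂μ := by
    filter_upwards [hl] with u hu
    rw [setIntegral_indicator (measurableSet_ray u),
      inter_eq_self_of_subset_right (ray_subset_ray hu), p.eq_sub_prim u (ray_subset_Ioo hr hu),
      prim]
  refine Tendsto.congr' hEq.symm (tendsto_const_nhds.sub ?_)
  have : ∫ s in E, |s| * h s ∂μ = ∫ s in ray r, E.indicator (fun s => |s| * h s) s ∂μ := by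
    rw [setIntegral_indicator hE, inter_eq_self_of_subset_right hEr]
  rw [this]
  refine tendsto_integral_filter_of_dominated_convergence (fun s => ‖|s| * h s‖) ?_ ?_ hi.norm ?_
  · exact Eventually.of_forall fun u => hi.aestronglyMeasurable.indicator (measurableSet_ray u)
  · exact Eventually.of_forall fun u => ae_of_all _ fun s => norm_indicator_le_norm_self _ _
  · refine ae_of_all _ fun s => tendsto_const_nhds.congr' ?_
    filter_upwards [hmem s] with u hu
    by_cases hs : s ∈ E
    · rw [indicator_of_mem hs, indicator_of_mem (hu.2 hs)]
    · rw [indicator_of_notMem hs, indicator_of_notMem fun h => hs (hu.1 h)]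

theorem tendsto_nhdsLT_of_pos (p : IsBVPair R h μ) (ht : t ∈ Ioo (-1 : ℝ) 1) (h0 : 0 < t) :
    Tendsto R (𝓝[<] t) (𝓝 (innerLim R h μ t)) := by
  refine p.tendsto_of_eventually_mem_iff
    ((measurableSet_ray t).diff (measurableSet_singleton t)) ht sdiff_subset ?_ fun x => ?_
  · filter_upwards [Ioo_mem_nhdsLT h0] with u hu
    simp only [ray, mem_ofPred_eq, mem_Ioo] at *
    grind
  · rcases lt_or_ge x t with hx | hx
    · filter_upwards [Ioo_mem_nhdsLT h0, Ioo_mem_nhdsLT hx] with u hu hu'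
      simp only [ray, mem_ofPred_eq, mem_Ioo, Set.mem_sdiff, mem_singleton_iff] at *
      grind
    · filter_upwards [Ioo_mem_nhdsLT h0] with u hu
      simp only [ray, mem_ofPred_eq, mem_Ioo, Set.mem_sdiff, mem_singleton_iff] at *
      grind

theorem tendsto_nhdsGT_of_neg (p : IsBVPair R h μ) (ht : t ∈ Ioo (-1 : ℝ) 1) (h0 : t < 0) :
    Tendsto R (𝓝[>] t) (𝓝 (innerLim R h μ t)) := by
  refine p.tendsto_of_eventually_mem_iff
    ((measurableSet_ray t).diff (measurableSet_singleton t)) ht sdiff_subset ?_ fun x => ?_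
  · filter_upwards [Ioo_mem_nhdsGT h0] with u hu
    simp only [ray, mem_ofPred_eq, mem_Ioo] at *
    grind
  · rcases lt_or_ge t x with hx | hx
    · filter_upwards [Ioo_mem_nhdsGT h0, Ioo_mem_nhdsGT hx] with u hu hu'
      simp only [ray, mem_ofPred_eq, mem_Ioo, Set.mem_sdiff, mem_singleton_iff] at *
      grind
    · filter_upwards [Ioo_mem_nhdsGT h0] with u hu
      simp only [ray, mem_ofPred_eq, mem_Ioo, Set.mem_sdiff, mem_singleton_iff] at *
      grind

theorem tendsto_nhdsGT_of_pos (p : IsBVPair R h μ) (ht : t ∈ Ioo (-1 : ℝ) 1) (h0 : 0 < t) :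
    Tendsto R (𝓝[>] t) (𝓝 (R t)) := by
  obtain ⟨r, hr₀, hr₁⟩ := exists_between ht.2
  rw [p.eq_sub_prim t ht]
  refine p.tendsto_of_eventually_mem_iff (measurableSet_ray t) (r := r)
    ⟨by linarith, hr₁⟩ (ray_subset_ray (Or.inl ⟨h0, hr₀.le⟩)) ?_ fun x => ?_
  · filter_upwards [Ioo_mem_nhdsGT hr₀] with u hu
    simp only [ray, mem_ofPred_eq, mem_Ioo] at *
    grind
  · rcases lt_or_ge t x with hx | hx
    · filter_upwards [Ioo_mem_nhdsGT hx] with u hu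
      simp only [ray, mem_ofPred_eq, mem_Ioo] at *
      grind
    · filter_upwards [self_mem_nhdsWithin] with u hu
      simp only [ray, mem_ofPred_eq, mem_Ioi] at *
      grind

theorem tendsto_nhdsLT_of_neg (p : IsBVPair R h μ) (ht : t ∈ Ioo (-1 : ℝ) 1) (h0 : t < 0) :
    Tendsto R (𝓝[<] t) (𝓝 (R t)) := by
  obtain ⟨r, hr₀, hr₁⟩ := exists_between ht.1
  rw [p.eq_sub_prim t ht]
  refine p.tendsto_of_eventually_mem_iff (measurableSet_ray t) (r := r)
    ⟨hr₀, by linarith⟩ (ray_subset_ray (Or.inr ⟨hr₁.le, h0⟩)) ?_ fun x => ?_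
  · filter_upwards [Ioo_mem_nhdsLT hr₁] with u hu
    simp only [ray, mem_ofPred_eq, mem_Ioo] at *
    grind
  · rcases lt_or_ge x t with hx | hx
    · filter_upwards [Ioo_mem_nhdsLT hx] with u hu
      simp only [ray, mem_ofPred_eq, mem_Ioo] at *
      grind
    · filter_upwards [self_mem_nhdsWithin] with u hu
      simp only [ray, mem_ofPred_eq, mem_Iio] at *
      grind

theorem le_abs_innerLim (p : IsBVPair R h μ) (ht : t ∈ Ioo (-1 : ℝ) 1) {ε : ℝ}
    (hε : ∀ s ∈ Icc (-|t|) |t|, ε ≤ |R s|) {s : ℝ} (hs : s ∈ ray t) :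
    ε ≤ |innerLim R h μ s| := by
  have hsI := ray_subset_Ioo ht hs
  have hsub := ray_subset_Icc t hs
  rcases hs with ⟨h0, -⟩ | ⟨-, h0⟩
  · refine ge_of_tendsto (p.tendsto_nhdsLT_of_pos hsI h0).abs ?_
    filter_upwards [Ioo_mem_nhdsLT h0] with u hu
    refine hε u ⟨?_, hu.2.le.trans hsub.2⟩
    linarith [hu.1, abs_nonneg t]
  · refine ge_of_tendsto (p.tendsto_nhdsGT_of_neg hsI h0).abs ?_
    filter_upwards [Ioo_mem_nhdsGT h0] with u hu
    refine hε u ⟨hsub.1.trans hu.1.le, ?_⟩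
    linarith [hu.2, abs_nonneg t]

theorem leftLim_mul_rightLim (p : IsBVPair R h μ) (ht : t ∈ Ioo (-1 : ℝ) 1) (h0 : t ≠ 0) :
    leftLim R t * rightLim R t = R t * innerLim R h μ t := by
  rcases lt_or_gt_of_ne h0 with h0 | h0
  · rw [leftLim_eq_of_tendsto (p.tendsto_nhdsLT_of_neg ht h0),
      rightLim_eq_of_tendsto (p.tendsto_nhdsGT_of_neg ht h0)]
  · rw [leftLim_eq_of_tendsto (p.tendsto_nhdsLT_of_pos ht h0),
      rightLim_eq_of_tendsto (p.tendsto_nhdsGT_of_pos ht h0), mul_comm]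

/-- The density with respect to `μ` of the signed measure attached to `1 / R`. -/
noncomputable def invDensity (R h : ℝ → ℝ) (μ : Measure ℝ) (s : ℝ) : ℝ :=
  -(R s * innerLim R h μ s)⁻¹ * h s

theorem aemeasurable (p : IsBVPair R h μ) (ht : t ∈ Ioo (-1 : ℝ) 1) :
    AEMeasurable R (μ.restrict (ray t)) := by
  have m := p.measure_ne_top t ht
  simpa using (p.integrableOn_mul ht m (integrableOn_const m (C := (1 : ℝ)))).aemeasurable

theorem aemeasurable_innerLim (p : IsBVPair R h μ) (ht : t ∈ Ioo (-1 : ℝ) 1) :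
    AEMeasurable (innerLim R h μ) (μ.restrict (ray t)) := by
  have m := p.measure_ne_top t ht
  simpa using (p.integrableOn_mul_innerLim ht m (integrableOn_const m (C := (1 : ℝ)))).aemeasurable

/-- The reciprocal of a pair bounded away from zero on compact sets. -/
theorem inv (p : IsBVPair R h μ) (hR : ∀ K : Set ℝ, IsCompact K → K ⊆ Ioo (-1 : ℝ) 1 →
      ∃ ε > (0 : ℝ), ∀ t ∈ K, ε ≤ |R t|) :
    IsBVPair (fun s => (R s)⁻¹) (invDensity R h μ) μ ∧
      ∀ s ∈ Ioo (-1 : ℝ) 1, R s ≠ 0 ∧ (s ≠ 0 → innerLim R h μ s ≠ 0) := by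
  have hbound : ∀ t ∈ Ioo (-1 : ℝ) 1, ∃ ε > (0 : ℝ), ε ≤ |R t| ∧ ∀ s ∈ ray t,
      ε ≤ |R s| ∧ ε ≤ |innerLim R h μ s| := by
    intro t ht
    have hsub : Icc (-|t|) |t| ⊆ Ioo (-1 : ℝ) 1 := by
      intro x hx
      simp only [mem_Icc, mem_Ioo] at *
      grind
    obtain ⟨ε, h0, hε⟩ := hR _ isCompact_Icc hsub
    exact ⟨ε, h0, hε t ⟨neg_abs_le t, le_abs_self t⟩, fun s hs =>
      ⟨hε s (ray_subset_Icc t hs), p.le_abs_innerLim ht hε hs⟩⟩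
  have hne : ∀ s ∈ Ioo (-1 : ℝ) 1, R s ≠ 0 ∧ (s ≠ 0 → innerLim R h μ s ≠ 0) := by
    intro s hs
    obtain ⟨ε, h0, h1, h2⟩ := hbound s hs
    refine ⟨abs_pos.1 (h0.trans_le h1), fun hs0 => abs_pos.1 (h0.trans_le (h2 s ?_).2)⟩
    simp only [ray, mem_ofPred_eq]
    grind
  have hnz : ∀ {t s : ℝ}, s ∈ ray t → s ≠ 0 := by
    intro t s hs
    simp only [ray, mem_ofPred_eq] at hs
    grind
  set k := invDensity R h μ with hk
  have hkint : ∀ t ∈ Ioo (-1 : ℝ) 1, IntegrableOn k (ray t) μ := by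
    intro t ht
    obtain ⟨ε, h0, -, h2⟩ := hbound t ht
    refine Integrable.bdd_mul (c := (ε * ε)⁻¹) (p.integrableOn t ht) ?_ ?_
    · exact ((p.aemeasurable ht).mul (p.aemeasurable_innerLim ht)).inv.neg.aestronglyMeasurable
    · filter_upwards [ae_restrict_mem (measurableSet_ray t)] with s hs
      rw [norm_neg, norm_inv, norm_mul, Real.norm_eq_abs, Real.norm_eq_abs]
      exact inv_anti₀ (by positivity)
        (mul_le_mul (h2 s hs).1 (h2 s hs).2 h0.le (abs_nonneg _))
  have hray0 : ray 0 = ∅ := by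
    rw [ray_of_nonpos le_rfl, Ico_self]
  set Q : ℝ → ℝ := fun t => (R 0)⁻¹ - prim μ (fun s => |s| * k s) t with hQ
  have hQ0 : Q 0 = (R 0)⁻¹ := by simp [hQ, prim, hray0]
  have q : IsBVPair Q k μ :=
    ⟨p.measure_ne_top, hkint, fun t _ => by rw [hQ0]⟩
  have hR0 : R 0 ≠ 0 := (hne 0 (by norm_num)).1
  set w : ℝ → ℝ := fun s => |s| * h s * innerLim Q k μ s + |s| * k s * R s with hw
  have hwint : ∀ t ∈ Ioo (-1 : ℝ) 1, IntegrableOn w (ray t) μ := fun t ht =>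
    (q.integrableOn_mul_innerLim ht (p.measure_ne_top t ht) (p.integrableOn_abs_mul ht)).add
      (p.integrableOn_mul ht (p.measure_ne_top t ht) (q.integrableOn_abs_mul ht))
  have hRQ : ∀ t ∈ Ioo (-1 : ℝ) 1, R t * Q t = 1 - prim μ w t := by
    intro t ht
    rw [p.mul_eq q ht, hQ0, mul_inv_cancel₀ hR0, prim, integral_add
      (q.integrableOn_mul_innerLim ht (p.measure_ne_top t ht) (p.integrableOn_abs_mul ht))
      (p.integrableOn_mul ht (p.measure_ne_top t ht) (q.integrableOn_abs_mul ht))]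
  have hwzero : ∀ t ∈ Ioo (-1 : ℝ) 1, prim μ w t = 0 := by
    intro t ht
    obtain ⟨ε, h0, -, h2⟩ := hbound t ht
    refine prim_eq_zero_of_abs_le
      (g := fun s => |(innerLim R h μ s)⁻¹ * (|s| * h s)|) (fun s => abs_nonneg _)
      (p.measure_ne_top t ht) ?_ (hwint t ht) ?_
    · refine Integrable.abs (Integrable.bdd_mul (c := ε⁻¹) (p.integrableOn_abs_mul ht) ?_ ?_)
      · exact (p.aemeasurable_innerLim ht).inv.aestronglyMeasurable
      · filter_upwards [ae_restrict_mem (measurableSet_ray t)] with s hs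
        rw [norm_inv, Real.norm_eq_abs]
        exact inv_anti₀ h0 (h2 s hs).2
    · intro s hs
      have hsI := ray_subset_Ioo ht hs
      have hi : innerLim R h μ s ≠ 0 := (hne s hsI).2 (hnz hs)
      have hRs : R s ≠ 0 := (hne s hsI).1
      have hprod : innerLim R h μ s * innerLim Q k μ s = 1 - primIn μ w s := by
        have e₁ := hRQ s hsI
        have e₂ := prim_eq_primIn_add hs (hwint t ht)
        have e₃ := p.innerLim_eq ht hs
        have e₄ := q.innerLim_eq ht hs
        have e₅ : w s = |s| * h s * innerLim Q k μ s + |s| * k s * R s := rfl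
        rw [e₅] at e₂
        linear_combination e₁ - e₂ + (innerLim Q k μ s) * e₃ + R s * e₄
      have hw' : w s = -((innerLim R h μ s)⁻¹ * (|s| * h s) * primIn μ w s) := by
        have : primIn μ w s = 1 - innerLim R h μ s * innerLim Q k μ s := by linarith
        rw [this]
        simp only [hw, hk, invDensity]
        field_simp
        ring
      rw [hw', abs_neg, abs_mul]
  refine ⟨⟨p.measure_ne_top, hkint, fun t ht => ?_⟩, hne⟩
  have h1 := hRQ t ht
  rw [hwzero t ht, sub_zero] at h1
  exact inv_eq_of_mul_eq_one_right h1

theorem bvT_bvT_inv (p : IsBVPair R h μ) (hR : ∀ K : Set ℝ, IsCompact K → K ⊆ Ioo (-1 : ℝ) 1 →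
      ∃ ε > (0 : ℝ), ∀ t ∈ K, ε ≤ |R t|)
    (hf : ContinuousOn f (Ioo (-1 : ℝ) 1)) (ht : t ∈ Ioo (-1 : ℝ) 1) :
    bvT R h μ (bvT (fun s => (R s)⁻¹) (invDensity R h μ) μ f) t = f t := by
  obtain ⟨q, hne⟩ := p.inv hR
  have e : ∫ s in ray t, f s * h s * innerLim (fun s => (R s)⁻¹) (invDensity R h μ) μ s ∂μ =
      -∫ s in ray t, f s * invDensity R h μ s * R s ∂μ := by
    rw [← integral_neg]
    refine setIntegral_congr_fun (measurableSet_ray t) fun s hs => ?_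
    have hs0 : s ≠ 0 := by
      rintro rfl
      simp [ray] at hs
    obtain ⟨h1, h2⟩ := hne s (ray_subset_Ioo ht hs)
    have h2 := h2 hs0
    have e := p.innerLim_eq ht hs
    have e' : innerLim (fun s => (R s)⁻¹) (invDensity R h μ) μ s = (innerLim R h μ s)⁻¹ := by
      rw [q.innerLim_eq ht hs, invDensity]
      field_simp
      linarith
    simp only [e', invDensity]
    field_simp
  rw [p.bvT_comp q hf ht, e, mul_inv_cancel₀ (hne t ht).1]
  ring

end IsBVPair

namespace NormBV0

variable {P Q : NormBV0} {f : ℝ → ℝ} {t : ℝ}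

/-- The total variation measure. -/
noncomputable def tv (P : NormBV0) : Measure ℝ := P.νp + P.νm

open Classical in
/-- The density of the signed measure with respect to its total variation. -/
noncomputable def sgn (P : NormBV0) (s : ℝ) : ℝ := if s ∈ P.sing.nullSet then -1 else 1

theorem sgn_ae_νp (P : NormBV0) : ∀ᵐ s ∂P.νp, P.sgn s = 1 := by
  have h : ∀ᵐ s ∂P.νp, s ∉ P.sing.nullSet := measure_eq_zero_iff_ae_notMem.1 P.sing.measure_nullSet
  filter_upwards [h] with s hs
  simp [sgn, hs]

theorem sgn_ae_νm (P : NormBV0) : ∀ᵐ s ∂P.νm, P.sgn s = -1 := by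
  have h : ∀ᵐ s ∂P.νm, s ∉ P.sing.nullSetᶜ :=
    measure_eq_zero_iff_ae_notMem.1 P.sing.measure_compl_nullSet
  filter_upwards [h] with s hs
  simp [sgn, notMem_compl_iff.1 hs]

theorem measurable_sgn (P : NormBV0) : Measurable P.sgn :=
  Measurable.ite P.sing.measurableSet_nullSet measurable_const measurable_const

theorem abs_sgn (P : NormBV0) (s : ℝ) : |P.sgn s| = 1 := by
  unfold sgn
  split_ifs <;> simp

theorem integrableOn_mul_sgn {S : Set ℝ} (hf : IntegrableOn f S P.tv) :
    IntegrableOn (fun s => f s * P.sgn s) S P.tv :=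
  Integrable.mul_bdd (c := 1) hf P.measurable_sgn.aestronglyMeasurable
    (ae_of_all _ fun s => (P.abs_sgn s).le)

theorem integ_eq {S : Set ℝ} (hf : IntegrableOn f S P.tv) :
    P.integ S f = ∫ s in S, f s * P.sgn s ∂P.tv := by
  have h := integrableOn_mul_sgn hf
  rw [tv, integrableOn_add_measure] at h
  rw [tv, Measure.restrict_add, integral_add_measure h.1 h.2, integ, sub_eq_add_neg, ← integral_neg]
  congr 1
  · refine integral_congr_ae ?_
    filter_upwards [ae_restrict_of_ae P.sgn_ae_νp] with s hs
    rw [hs, mul_one]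
  · refine integral_congr_ae ?_
    filter_upwards [ae_restrict_of_ae P.sgn_ae_νm] with s hs
    rw [hs, mul_neg_one]

theorem tv_ne_top (P : NormBV0) (ht : t ∈ Ioo (-1 : ℝ) 1) : P.tv (ray t) ≠ ⊤ := by
  have hsub : Icc (-|t|) |t| ⊆ Ioo (-1 : ℝ) 1 := by
    intro x hx
    simp only [mem_Icc, mem_Ioo] at *
    grind
  refine ((measure_mono (ray_subset_Icc t)).trans_lt (lt_top_iff_ne_top.2 ?_)).ne
  rw [tv, Measure.add_apply]
  exact ENNReal.add_ne_top.2
    ⟨P.locfin_p _ isCompact_Icc hsub, P.locfin_m _ isCompact_Icc hsub⟩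

theorem tv_singleton_zero (P : NormBV0) : P.tv {0} = 0 := by
  simp [tv, P.zero_p, P.zero_m]

theorem integrableOn_of_continuousOn (P : NormBV0) (hf : ContinuousOn f (Ioo (-1 : ℝ) 1))
    (ht : t ∈ Ioo (-1 : ℝ) 1) : IntegrableOn f (ray t) P.tv := by
  simpa using integrableOn_ray_mul ht hf (integrableOn_const (P.tv_ne_top ht) (C := (1 : ℝ)))

theorem isBVPair (P : NormBV0) : IsBVPair P.R P.sgn P.tv where
  measure_ne_top _ ht := P.tv_ne_top ht
  integrableOn t ht := by
    simpa using integrableOn_mul_sgn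
      (integrableOn_const (P.tv_ne_top ht) (C := (1 : ℝ)))
  eq_sub_prim t ht := by
    have hi := P.integrableOn_of_continuousOn continuous_abs.continuousOn ht
    rw [prim, ← integ_eq hi]
    rcases lt_or_ge 0 t with h0 | h0
    · rw [P.fund_pos t ⟨h0.le, ht.2⟩, ray_of_pos h0, integ]
      congr 2 <;>
      exact setIntegral_congr_fun measurableSet_Ioc fun s hs => (abs_of_pos hs.1).symm
    · rw [P.fund_neg t ⟨ht.1, h0⟩, ray_of_nonpos h0, integ,
        setIntegral_congr_fun measurableSet_Ico fun s hs => abs_of_neg hs.2,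
        setIntegral_congr_fun measurableSet_Ico fun s hs => abs_of_neg hs.2,
        integral_neg, integral_neg]
      ring

theorem T_eq_integ (P : NormBV0) (f : ℝ → ℝ) (t : ℝ) :
    P.T f t = P.R t * f t + |t| * P.integ (ray t) f := by
  rcases lt_or_ge 0 t with h0 | h0
  · rw [T, if_pos h0, ray_of_pos h0, abs_of_pos h0]
  · rw [T, if_neg h0.not_gt, ray_of_nonpos h0, abs_of_nonpos h0]
    ring

theorem T_eq_bvT (P : NormBV0) (hf : ContinuousOn f (Ioo (-1 : ℝ) 1)) (ht : t ∈ Ioo (-1 : ℝ) 1) :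
    P.T f t = bvT P.R P.sgn P.tv f t := by
  rw [T_eq_integ, integ_eq (P.integrableOn_of_continuousOn hf ht), bvT, prim]

theorem continuousOn_T (P : NormBV0) (hf : ContinuousOn f (Ioo (-1 : ℝ) 1)) :
    ContinuousOn (P.T f) (Ioo (-1 : ℝ) 1) :=
  (P.isBVPair.continuousOn_bvT hf).congr fun _ ht => P.T_eq_bvT hf ht

theorem _root_.bvT_congr {R h g : ℝ → ℝ} {μ : Measure ℝ} (ht : t ∈ Ioo (-1 : ℝ) 1)
    (hfg : ∀ s ∈ Ioo (-1 : ℝ) 1, f s = g s) : bvT R h μ f t = bvT R h μ g t := by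
  rw [bvT, bvT, hfg t ht]
  congr 2
  exact prim_congr fun s hs => by rw [hfg s (ray_subset_Ioo ht hs)]

theorem T_T_eq (P Q : NormBV0) (hf : ContinuousOn f (Ioo (-1 : ℝ) 1)) (ht : t ∈ Ioo (-1 : ℝ) 1) :
    P.T (Q.T f) t = bvT P.R P.sgn P.tv (bvT Q.R Q.sgn Q.tv f) t := by
  rw [P.T_eq_bvT (Q.continuousOn_T hf) ht]
  exact bvT_congr ht fun s hs => Q.T_eq_bvT hf hs

theorem integ_mul_eq {g k : ℝ → ℝ} (hgk : ∀ s ∈ ray t, g s = k s)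
    (hi : IntegrableOn (fun s => f s * k s) (ray t) P.tv) :
    P.integ (ray t) (fun s => g s * f s) = ∫ s in ray t, f s * P.sgn s * k s ∂P.tv := by
  have hi' : IntegrableOn (fun s => g s * f s) (ray t) P.tv :=
    hi.congr_fun (fun s hs => by simp only [hgk s hs, mul_comm]) (measurableSet_ray t)
  rw [integ_eq hi']
  refine setIntegral_congr_fun (measurableSet_ray t) fun s hs => ?_
  simp only [hgk s hs]
  ring

theorem leftLim_of_pos (ht : t ∈ Ioo (-1 : ℝ) 1) (h0 : 0 < t) :
    ∀ s ∈ ray t, leftLim P.R s = innerLim P.R P.sgn P.tv s := fun s hs =>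
  leftLim_eq_of_tendsto (P.isBVPair.tendsto_nhdsLT_of_pos (ray_subset_Ioo ht hs)
    (by rw [ray_of_pos h0] at hs; exact hs.1))

theorem rightLim_of_pos (ht : t ∈ Ioo (-1 : ℝ) 1) (h0 : 0 < t) :
    ∀ s ∈ ray t, rightLim P.R s = P.R s := fun s hs =>
  rightLim_eq_of_tendsto (P.isBVPair.tendsto_nhdsGT_of_pos (ray_subset_Ioo ht hs)
    (by rw [ray_of_pos h0] at hs; exact hs.1))

theorem leftLim_of_nonpos (ht : t ∈ Ioo (-1 : ℝ) 1) (h0 : t ≤ 0) :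
    ∀ s ∈ ray t, leftLim P.R s = P.R s := fun s hs =>
  leftLim_eq_of_tendsto (P.isBVPair.tendsto_nhdsLT_of_neg (ray_subset_Ioo ht hs)
    (by rw [ray_of_nonpos h0] at hs; exact hs.2))

theorem rightLim_of_nonpos (ht : t ∈ Ioo (-1 : ℝ) 1) (h0 : t ≤ 0) :
    ∀ s ∈ ray t, rightLim P.R s = innerLim P.R P.sgn P.tv s := fun s hs =>
  rightLim_eq_of_tendsto (P.isBVPair.tendsto_nhdsGT_of_neg (ray_subset_Ioo ht hs)
    (by rw [ray_of_nonpos h0] at hs; exact hs.2))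

/-- The integral against the signed measure of the product pair. -/
theorem integ_add_integ_of_pos (P Q : NormBV0) (hf : ContinuousOn f (Ioo (-1 : ℝ) 1))
    (ht : t ∈ Ioo (-1 : ℝ) 1) (h0 : 0 < t) :
    P.integ (ray t) (fun s => leftLim Q.R s * f s) +
        Q.integ (ray t) (fun s => rightLim P.R s * f s) =
      ∫ s in ray t, f s * P.sgn s * innerLim Q.R Q.sgn Q.tv s ∂P.tv +
        ∫ s in ray t, f s * Q.sgn s * P.R s ∂Q.tv := by
  rw [integ_mul_eq (leftLim_of_pos ht h0) (Q.isBVPair.integrableOn_mul_innerLim ht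
      (P.tv_ne_top ht) (P.integrableOn_of_continuousOn hf ht)),
    integ_mul_eq (rightLim_of_pos ht h0) (P.isBVPair.integrableOn_mul ht
      (Q.tv_ne_top ht) (Q.integrableOn_of_continuousOn hf ht))]

theorem integ_add_integ_of_nonpos (P Q : NormBV0) (hf : ContinuousOn f (Ioo (-1 : ℝ) 1))
    (ht : t ∈ Ioo (-1 : ℝ) 1) (h0 : t ≤ 0) :
    P.integ (ray t) (fun s => leftLim Q.R s * f s) +
        Q.integ (ray t) (fun s => rightLim P.R s * f s) =
      ∫ s in ray t, f s * Q.sgn s * innerLim P.R P.sgn P.tv s ∂Q.tv +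
        ∫ s in ray t, f s * P.sgn s * Q.R s ∂P.tv := by
  rw [integ_mul_eq (leftLim_of_nonpos ht h0) (Q.isBVPair.integrableOn_mul ht
      (P.tv_ne_top ht) (P.integrableOn_of_continuousOn hf ht)),
    integ_mul_eq (rightLim_of_nonpos ht h0) (P.isBVPair.integrableOn_mul_innerLim ht
      (Q.tv_ne_top ht) (Q.integrableOn_of_continuousOn hf ht)), add_comm]

theorem Tprod_eq (P Q : NormBV0) (hf : ContinuousOn f (Ioo (-1 : ℝ) 1))
    (ht : t ∈ Ioo (-1 : ℝ) 1) : Tprod P Q f t = P.T (Q.T f) t := by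
  rw [T_T_eq P Q hf ht]
  rcases lt_or_ge 0 t with h0 | h0
  · rw [Tprod, if_pos h0, ← ray_of_pos h0, integ_add_integ_of_pos P Q hf ht h0,
      P.isBVPair.bvT_comp Q.isBVPair hf ht, abs_of_pos h0]
  · rw [Tprod, if_neg h0.not_gt, ← ray_of_nonpos h0, integ_add_integ_of_nonpos P Q hf ht h0,
      P.isBVPair.bvT_comm Q.isBVPair hf ht, Q.isBVPair.bvT_comp P.isBVPair hf ht,
      abs_of_nonpos h0]
    ring

theorem T_comm (P Q : NormBV0) (hf : ContinuousOn f (Ioo (-1 : ℝ) 1))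
    (ht : t ∈ Ioo (-1 : ℝ) 1) : P.T (Q.T f) t = Q.T (P.T f) t := by
  rw [T_T_eq P Q hf ht, T_T_eq Q P hf ht, P.isBVPair.bvT_comm Q.isBVPair hf ht]

theorem mul_eq_of_nonneg (P Q : NormBV0) (ht : t ∈ Ico (0 : ℝ) 1) :
    P.R t * Q.R t = P.R 0 * Q.R 0 -
      (P.integ (Ioc 0 t) (fun s => s * leftLim Q.R s) +
        Q.integ (Ioc 0 t) (fun s => s * rightLim P.R s)) := by
  rcases ht.1.eq_or_lt with rfl | h0
  · simp [integ]
  have ht' : t ∈ Ioo (-1 : ℝ) 1 := ⟨by linarith, ht.2⟩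
  simp_rw [mul_comm _ (leftLim _ _), mul_comm _ (rightLim _ _)]
  rw [← ray_of_pos h0, integ_add_integ_of_pos P Q (continuousOn_id' _) ht' h0,
    P.isBVPair.mul_eq Q.isBVPair ht']
  congr 2 <;>
  · refine setIntegral_congr_fun (measurableSet_ray t) fun s hs => ?_
    rw [ray_of_pos h0] at hs
    simp only [abs_of_pos hs.1]

theorem mul_eq_of_nonpos (P Q : NormBV0) (ht : t ∈ Ioc (-1 : ℝ) 0) :
    P.R t * Q.R t = P.R 0 * Q.R 0 +
      (P.integ (Ico t 0) (fun s => s * leftLim Q.R s) +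
        Q.integ (Ico t 0) (fun s => s * rightLim P.R s)) := by
  have h0 := ht.2
  have ht' : t ∈ Ioo (-1 : ℝ) 1 := ⟨ht.1, by linarith⟩
  simp_rw [mul_comm _ (leftLim _ _), mul_comm _ (rightLim _ _)]
  rw [← ray_of_nonpos h0, integ_add_integ_of_nonpos P Q (continuousOn_id' _) ht' h0,
    mul_comm (P.R t), mul_comm (P.R 0), Q.isBVPair.mul_eq P.isBVPair ht', sub_eq_add_neg, neg_add,
    ← integral_neg, ← integral_neg]
  congr 2 <;>
  · refine setIntegral_congr_fun (measurableSet_ray t) fun s hs => ?_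
    rw [ray_of_nonpos h0] at hs
    simp only [abs_of_neg hs.2]
    ring

theorem integrableOn_of_forall_ray (P : NormBV0) {K : Set ℝ} (hK : IsCompact K)
    (hKsub : K ⊆ Ioo (-1 : ℝ) 1) (hf : ∀ t ∈ Ioo (-1 : ℝ) 1, IntegrableOn f (ray t) P.tv) :
    IntegrableOn f K P.tv := by
  rcases K.eq_empty_or_nonempty with rfl | hne
  · exact integrableOn_empty
  obtain ⟨x, hx, hmax⟩ := hK.exists_isMaxOn hne continuous_abs.continuousOn
  have hr : |x| < 1 := abs_lt.2 (hKsub hx)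
  have hr0 := abs_nonneg x
  have hzero : IntegrableOn f {0} P.tv := by
    rw [IntegrableOn, Measure.restrict_eq_zero.2 P.tv_singleton_zero]
    exact integrable_zero_measure
  refine (((hf |x| ⟨by linarith, hr⟩).union (hf (-|x|) ⟨by linarith, by linarith⟩)).union
    hzero).mono_set fun y hy => ?_
  have hy' : |y| ≤ |x| := hmax hy
  have := abs_le.1 hy'
  simp only [ray, mem_union, mem_ofPred_eq, mem_singleton_iff]
  grind

theorem integrableOn_leftLim (P Q : NormBV0) {K : Set ℝ} (hK : IsCompact K)
    (hKsub : K ⊆ Ioo (-1 : ℝ) 1) : IntegrableOn (fun t => leftLim Q.R t) K P.tv := by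
  refine P.integrableOn_of_forall_ray hK hKsub fun t ht => ?_
  have h1 := integrableOn_const (P.tv_ne_top ht) (C := (1 : ℝ))
  rcases lt_or_ge 0 t with h0 | h0
  · exact (Q.isBVPair.integrableOn_mul_innerLim ht (P.tv_ne_top ht) h1).congr_fun
      (fun s hs => by simp only [leftLim_of_pos ht h0 s hs, one_mul]) (measurableSet_ray t)
  · exact (Q.isBVPair.integrableOn_mul ht (P.tv_ne_top ht) h1).congr_fun
      (fun s hs => by simp only [leftLim_of_nonpos ht h0 s hs, one_mul]) (measurableSet_ray t)

theorem integrableOn_rightLim (P Q : NormBV0) {K : Set ℝ} (hK : IsCompact K)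
    (hKsub : K ⊆ Ioo (-1 : ℝ) 1) : IntegrableOn (fun t => rightLim P.R t) K Q.tv := by
  refine Q.integrableOn_of_forall_ray hK hKsub fun t ht => ?_
  have h1 := integrableOn_const (Q.tv_ne_top ht) (C := (1 : ℝ))
  rcases lt_or_ge 0 t with h0 | h0
  · exact (P.isBVPair.integrableOn_mul ht (Q.tv_ne_top ht) h1).congr_fun
      (fun s hs => by simp only [rightLim_of_pos ht h0 s hs, one_mul]) (measurableSet_ray t)
  · exact (P.isBVPair.integrableOn_mul_innerLim ht (Q.tv_ne_top ht) h1).congr_fun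
      (fun s hs => by simp only [rightLim_of_nonpos ht h0 s hs, one_mul]) (measurableSet_ray t)

theorem Tinv_eq_bvT (P : NormBV0) (hR : ∀ K : Set ℝ, IsCompact K → K ⊆ Ioo (-1 : ℝ) 1 →
      ∃ ε > (0 : ℝ), ∀ t ∈ K, ε ≤ |P.R t|)
    (hf : ContinuousOn f (Ioo (-1 : ℝ) 1)) (ht : t ∈ Ioo (-1 : ℝ) 1) :
    P.Tinv f t =
      bvT (fun s => (P.R s)⁻¹) (IsBVPair.invDensity P.R P.sgn P.tv) P.tv f t := by
  set g : ℝ → ℝ := fun s => -((leftLim P.R s * rightLim P.R s)⁻¹) * f s with hg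
  have e : P.Tinv f t = (P.R t)⁻¹ * f t + |t| * P.integ (ray t) g := by
    rcases lt_or_ge 0 t with h0 | h0
    · rw [Tinv, if_pos h0, ray_of_pos h0, abs_of_pos h0]
    · rw [Tinv, if_neg h0.not_gt, ray_of_nonpos h0, abs_of_nonpos h0]
      ring
  have hgs : ∀ s ∈ ray t,
      g s = f s * IsBVPair.invDensity P.R P.sgn P.tv s * P.sgn s := by
    intro s hs
    have hs0 : s ≠ 0 := by
      rintro rfl
      simp [ray] at hs
    have hsq : P.sgn s * P.sgn s = 1 := by
      rw [← abs_mul_abs_self, P.abs_sgn, one_mul]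
    simp only [hg, P.isBVPair.leftLim_mul_rightLim (ray_subset_Ioo ht hs) hs0,
      IsBVPair.invDensity]
    linear_combination (P.R s * innerLim P.R P.sgn P.tv s)⁻¹ * f s * hsq
  have hi : IntegrableOn g (ray t) P.tv :=
    (integrableOn_mul_sgn (integrableOn_ray_mul ht hf
      ((P.isBVPair.inv hR).1.integrableOn t ht))).congr_fun
      (fun s hs => (hgs s hs).symm) (measurableSet_ray t)
  rw [e, integ_eq hi, bvT]
  congr 2
  refine setIntegral_congr_fun (measurableSet_ray t) fun s hs => ?_
  have hsq : P.sgn s * P.sgn s = 1 := by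
    rw [← abs_mul_abs_self, P.abs_sgn, one_mul]
  simp only [hgs s hs]
  linear_combination f s * IsBVPair.invDensity P.R P.sgn P.tv s * hsq

theorem continuousOn_Tinv (P : NormBV0) (hR : ∀ K : Set ℝ, IsCompact K → K ⊆ Ioo (-1 : ℝ) 1 →
      ∃ ε > (0 : ℝ), ∀ t ∈ K, ε ≤ |P.R t|) (hf : ContinuousOn f (Ioo (-1 : ℝ) 1)) :
    ContinuousOn (P.Tinv f) (Ioo (-1 : ℝ) 1) :=
  ((P.isBVPair.inv hR).1.continuousOn_bvT hf).congr fun _ ht => P.Tinv_eq_bvT hR hf ht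

theorem T_Tinv (P : NormBV0) (hR : ∀ K : Set ℝ, IsCompact K → K ⊆ Ioo (-1 : ℝ) 1 →
      ∃ ε > (0 : ℝ), ∀ t ∈ K, ε ≤ |P.R t|) (hf : ContinuousOn f (Ioo (-1 : ℝ) 1))
    (ht : t ∈ Ioo (-1 : ℝ) 1) : P.T (P.Tinv f) t = f t := by
  rw [P.T_eq_bvT (P.continuousOn_Tinv hR hf) ht,
    bvT_congr ht fun s hs => P.Tinv_eq_bvT hR hf hs, P.isBVPair.bvT_bvT_inv hR hf ht]

theorem Tinv_T (P : NormBV0) (hR : ∀ K : Set ℝ, IsCompact K → K ⊆ Ioo (-1 : ℝ) 1 →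
      ∃ ε > (0 : ℝ), ∀ t ∈ K, ε ≤ |P.R t|) (hf : ContinuousOn f (Ioo (-1 : ℝ) 1))
    (ht : t ∈ Ioo (-1 : ℝ) 1) : P.Tinv (P.T f) t = f t := by
  rw [P.Tinv_eq_bvT hR (P.continuousOn_T hf) ht,
    bvT_congr ht fun s hs => P.T_eq_bvT hf hs,
    (P.isBVPair.inv hR).1.bvT_comm P.isBVPair hf ht, P.isBVPair.bvT_bvT_inv hR hf ht]

end NormBV0

/-- `(RQ, ν_{RQ})` is a normalized BV₀ pair (locally finite densities and
fundamental relations), the transforms satisfy `T_{RQ} = T_R ∘ T_Q = T_Q ∘ T_R` on continuous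
functions, and if `inf_K |R| > 0` on compacts then `T_R` is a bijection of `C(-1,1)` onto
itself with inverse `T_{1/R, ν_{1/R}}`. -/
theorem bv0_product_pair_and_semigroup (P Q : NormBV0) :
    (∀ K : Set ℝ, IsCompact K → K ⊆ Set.Ioo (-1 : ℝ) 1 →
      MeasureTheory.IntegrableOn (fun t => Function.leftLim Q.R t) K (P.νp + P.νm) ∧
      MeasureTheory.IntegrableOn (fun t => Function.rightLim P.R t) K (Q.νp + Q.νm)) ∧
    (∀ t ∈ Set.Ico (0 : ℝ) 1,
      P.R t * Q.R t = P.R 0 * Q.R 0 -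
        (P.integ (Set.Ioc 0 t) (fun s => s * Function.leftLim Q.R s) +
          Q.integ (Set.Ioc 0 t) (fun s => s * Function.rightLim P.R s))) ∧
    (∀ t ∈ Set.Ioc (-1 : ℝ) 0,
      P.R t * Q.R t = P.R 0 * Q.R 0 +
        (P.integ (Set.Ico t 0) (fun s => s * Function.leftLim Q.R s) +
          Q.integ (Set.Ico t 0) (fun s => s * Function.rightLim P.R s))) ∧
    (∀ f : ℝ → ℝ, ContinuousOn f (Set.Ioo (-1 : ℝ) 1) → ∀ t ∈ Set.Ioo (-1 : ℝ) 1,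
      NormBV0.Tprod P Q f t = P.T (Q.T f) t ∧ NormBV0.Tprod P Q f t = Q.T (P.T f) t) ∧
    ((∀ K : Set ℝ, IsCompact K → K ⊆ Set.Ioo (-1 : ℝ) 1 →
        ∃ ε > (0 : ℝ), ∀ t ∈ K, ε ≤ |P.R t|) →
      (∀ f : ℝ → ℝ, ContinuousOn f (Set.Ioo (-1 : ℝ) 1) →
        ContinuousOn (P.T f) (Set.Ioo (-1 : ℝ) 1) ∧
        ContinuousOn (P.Tinv f) (Set.Ioo (-1 : ℝ) 1) ∧
        (∀ t ∈ Set.Ioo (-1 : ℝ) 1, P.Tinv (P.T f) t = f t ∧ P.T (P.Tinv f) t = f t)) ∧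
      (∀ g : ℝ → ℝ, ContinuousOn g (Set.Ioo (-1 : ℝ) 1) →
        ∃ f : ℝ → ℝ, ContinuousOn f (Set.Ioo (-1 : ℝ) 1) ∧
          ∀ t ∈ Set.Ioo (-1 : ℝ) 1, P.T f t = g t)) := by
  exact ⟨fun K hK hKsub => ⟨NormBV0.integrableOn_leftLim P Q hK hKsub,
      NormBV0.integrableOn_rightLim P Q hK hKsub⟩,
    fun t ht => P.mul_eq_of_nonneg Q ht, fun t ht => P.mul_eq_of_nonpos Q ht,
    fun f hf t ht => ⟨P.Tprod_eq Q hf ht, (P.Tprod_eq Q hf ht).trans (P.T_comm Q hf ht)⟩,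
    fun hR => ⟨fun f hf => ⟨P.continuousOn_T hf, P.continuousOn_Tinv hR hf,
      fun t ht => ⟨P.Tinv_T hR hf ht, P.T_Tinv hR hf ht⟩⟩,
      fun g hg => ⟨P.Tinv g, P.continuousOn_Tinv hR hg, fun t ht => P.T_Tinv hR hg ht⟩⟩⟩
end
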